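/- arXiv:2508.21551 — 5 statements merged into one kernel-verified Lean document; each statement's English description precedes it below -/
import Mathlib

section
/- If G is a connected finite simple graph of order n that is isomorphic to neither K_2 nor the 5-cycle C_5, then the isolation number of G satisfies ι(G) ≤ n/3. -/
open Classical

/-- The closed neighborhood `N[D]` of a set `D` of vertices. -/
def closedNbhd {V : Type*} (G : SimpleGraph V) (D : Set V) : Set V :=
  {v | v ∈ D ∨ ∃ u ∈ D, G.Adj u v}

/-- `S` is an isolating set of `G`: deleting `N[S]` leaves no edge. -/
def IsIsolatingSet {V : Type*} (G : SimpleGraph V) (S : Set V) : Prop :=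
  ∀ u v : V, G.Adj u v → u ∈ closedNbhd G S ∨ v ∈ closedNbhd G S

/-- The isolation number: the minimum cardinality of an isolating set. -/
noncomputable def isolationNumber {V : Type*} [Fintype V] (G : SimpleGraph V) : ℕ :=
  sInf {k | ∃ S : Set V, IsIsolatingSet G S ∧ S.ncard = k}

namespace IsoProof

def Full {V : Type*} (G : SimpleGraph V) (f : V → ZMod 3) (v : V) : Prop :=
  ∀ c, ∃ w, (w = v ∨ G.Adj v w) ∧ f w = c

def Rel {V : Type*} (G : SimpleGraph V) (B : Finset V) (a b : V) : Prop :=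
  G.Adj a b ∧ a ∈ B ∧ b ∈ B

lemma three (a c : ZMod 3) : c = a ∨ c = a + 1 ∨ c = a + 1 + 1 := by
  revert a c; decide

lemma full_of {V : Type*} {G : SimpleGraph V} {f : V → ZMod 3} {v p w : V}
    (hp : G.Adj v p) (hw : G.Adj v w) (h1 : f v = f p + 1) (h2 : f w = f v + 1) :
    Full G f v := by
  intro c
  rcases three (f p) c with h | h | h
  · exact ⟨p, Or.inr hp, h.symm⟩
  · exact ⟨v, Or.inl rfl, by rw [h1, h]⟩
  · exact ⟨w, Or.inr hw, by rw [h2, h1, h]⟩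

lemma forest {V : Type*} (G : SimpleGraph V) : ∀ (N : ℕ) (B : Finset V), B.card ≤ N →
    ∀ (g : V → ZMod 3) (Q : Set V), (∀ q ∈ Q, q ∉ B) →
    (∀ v ∈ B, ∃ w ∈ B, Relation.ReflTransGen (Rel G B) w v ∧ ∃ q ∈ Q, G.Adj q w) →
    ∃ f : V → ZMod 3, (∀ v, v ∉ B → f v = g v) ∧
      (∀ u v, u ∈ B → v ∈ B → G.Adj u v → Full G f u ∨ Full G f v) ∧
      (B.Nonempty → ∃ r ∈ B, ∃ p ∈ Q, G.Adj p r ∧ f r = g p + 1) := by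
  intro N
  induction N with
  | zero =>
    intro B hB g Q _ _
    have : B = ∅ := by simpa using hB
    subst this
    exact ⟨g, by simp, by simp, by simp⟩
  | succ N ih =>
    intro B hB g Q hQ hreach
    rcases B.eq_empty_or_nonempty with hE | ⟨v0, hv0⟩
    · subst hE
      exact ⟨g, by simp, by simp, by simp⟩
    obtain ⟨r, hr, -, p, hpQ, hpr⟩ := hreach v0 hv0
    have hpB := hQ p hpQ
    set C := B.filter (fun v => Relation.ReflTransGen (Rel G B) r v) with hC
    have hrC : r ∈ C := by simp [hC, hr, Relation.ReflTransGen.refl]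
    have hCB : C ⊆ B := Finset.filter_subset _ _
    have hclosed : ∀ u v, u ∈ C → v ∈ B → G.Adj u v → v ∈ C := by
      intro u v hu hv huv
      simp only [hC, Finset.mem_filter] at hu ⊢
      exact ⟨hv, hu.2.tail ⟨huv, hu.1, hv⟩⟩
    have hclosed' : ∀ u v, u ∈ B \ C → v ∈ B → G.Adj u v → v ∈ B \ C := by
      intro u v hu hv huv
      simp only [Finset.mem_sdiff] at hu ⊢
      exact ⟨hv, fun h => hu.2 (hclosed v u h hu.1 huv.symm)⟩
    have hcard1 : (C.erase r).card ≤ N := by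
      have := Finset.card_erase_lt_of_mem hrC
      have := Finset.card_le_card hCB
      omega
    have hcard2 : (B \ C).card ≤ N := by
      have h1 := Finset.card_sdiff_add_card_eq_card hCB
      have : 0 < C.card := Finset.card_pos.mpr ⟨r, hrC⟩
      omega
    set g' := Function.update g r (g p + 1) with hg'
    obtain ⟨f1, h1a, h1b, h1c⟩ := ih (C.erase r) hcard1 g' {r} (by simp) (by
      intro v hv
      have hvC := Finset.mem_of_mem_erase hv
      have hvr := Finset.ne_of_mem_erase hv
      have hpath : Relation.ReflTransGen (Rel G B) r v := by
        simp only [hC, Finset.mem_filter] at hvC; exact hvC.2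
      clear hv
      have key : v = r ∨ ∃ w ∈ C.erase r,
          Relation.ReflTransGen (Rel G (C.erase r)) w v ∧ G.Adj r w := by
        clear hvr hvC
        induction hpath with
        | refl => exact Or.inl rfl
        | tail hab hbc ihh =>
          rename_i b c
          by_cases hcr : c = r
          · exact Or.inl hcr
          right
          have hbC : b ∈ C := by simp only [hC, Finset.mem_filter]; exact ⟨hbc.2.1, hab⟩
          have hcC : c ∈ C := hclosed b c hbC hbc.2.2 hbc.1
          have hcE : c ∈ C.erase r := Finset.mem_erase.mpr ⟨hcr, hcC⟩
          by_cases hbr : b = r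
          · subst hbr
            exact ⟨c, hcE, .refl, hbc.1⟩
          · rcases ihh with h | ⟨w, hw, hwb, hrw⟩
            · exact absurd h hbr
            · exact ⟨w, hw, hwb.tail ⟨hbc.1, Finset.mem_erase.mpr ⟨hbr, hbC⟩, hcE⟩, hrw⟩
      rcases key with h | ⟨w, hw, h1, h2⟩
      · exact absurd h hvr
      · exact ⟨w, hw, h1, r, rfl, h2⟩)
    obtain ⟨f, ha, hb, hc⟩ := ih (B \ C) hcard2 f1 Q
      (fun q hq h => hQ q hq (Finset.mem_sdiff.mp h).1) (by
      intro v hv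
      obtain ⟨w, hw, hwv, q, hq, hqw⟩ := hreach v (Finset.mem_sdiff.mp hv).1
      have key : w ∈ B \ C ∧ Relation.ReflTransGen (Rel G (B \ C)) w v := by
        clear hqw hw
        induction hwv using Relation.ReflTransGen.head_induction_on with
        | refl => exact ⟨hv, .refl⟩
        | head hab hbc ihh =>
          have := hclosed' _ _ ihh.1 hab.2.1 hab.1.symm
          exact ⟨this, ihh.2.head ⟨hab.1, this, ihh.1⟩⟩
      exact ⟨w, key.1, key.2, q, hq, hqw⟩)
    have hfr : f r = g p + 1 := by
      rw [ha r (by simp [hrC]), h1a r (by simp)]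
      simp [hg']
    have hpr' : p ≠ r := fun h => hpB (h ▸ hr)
    have hfg : ∀ v, v ∉ B → f v = g v := by
      intro v hv
      rw [ha v (by simp [hv]), h1a v (fun h => hv (hCB (Finset.mem_of_mem_erase h)))]
      have : v ≠ r := fun h => hv (h ▸ hr)
      simp [hg', this]
    have hfull : ∀ v ∈ C, Full G f1 v → Full G f v := by
      intro v hv h c
      obtain ⟨w, hw, hwc⟩ := h c
      refine ⟨w, hw, ?_⟩
      rw [ha w ?_, hwc]
      intro hwB
      rcases hw with rfl | hw
      · exact (Finset.mem_sdiff.mp hwB).2 hv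
      · exact (Finset.mem_sdiff.mp hwB).2 (hclosed v w hv (Finset.mem_sdiff.mp hwB).1 hw)
    have hrfull : ∀ v ∈ C.erase r, Full G f r := by
      intro v hv
      obtain ⟨w, hw, q, hq, hqw, hfw⟩ := h1c ⟨v, hv⟩
      rw [Set.mem_singleton_iff] at hq
      subst hq
      refine full_of hpr.symm hqw (by rw [hfr, hfg p hpB]) ?_
      rw [ha w (by simp [Finset.mem_of_mem_erase hw]), hfw, hfr]
      simp [hg']
    refine ⟨f, hfg, ?_, fun _ => ⟨r, hr, p, hpQ, hpr, hfr⟩⟩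
    intro u v hu hv huv
    by_cases huC : u ∈ C
    · have hvC := hclosed u v huC hv huv
      by_cases hur : u = r
      · subst hur
        exact Or.inl (hrfull v (Finset.mem_erase.mpr ⟨huv.ne', hvC⟩))
      by_cases hvr : v = r
      · subst hvr
        exact Or.inr (hrfull u (Finset.mem_erase.mpr ⟨huv.ne, huC⟩))
      rcases h1b u v (Finset.mem_erase.mpr ⟨hur, huC⟩) (Finset.mem_erase.mpr ⟨hvr, hvC⟩) huv
        with h | h
      · exact Or.inl (hfull u huC h)
      · exact Or.inr (hfull v hvC h)
    · have hu' := Finset.mem_sdiff.mpr ⟨hu, huC⟩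
      exact hb u v hu' (hclosed' u v hu' hv huv) huv

def IsP {V : Type*} (G : SimpleGraph V) (x : ℕ → V) (m : ℕ) : Prop :=
  (∀ i < m, G.Adj (x i) (x (i + 1))) ∧ ∀ i ≤ m, ∀ j ≤ m, x i = x j → i = j

lemma exists_longest {V : Type*} [Fintype V] [Nonempty V] (G : SimpleGraph V) :
    ∃ x m, IsP G x m ∧ ∀ y, ¬ IsP G y (m + 1) := by
  by_contra hcon
  push Not at hcon
  have : ∀ m, ∃ x, IsP G x m := by
    intro m
    induction m with
    | zero => exact ⟨fun _ => Classical.arbitrary V, by simp [IsP]⟩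
    | succ m ih => obtain ⟨x, hx⟩ := ih; exact hcon x m hx
  obtain ⟨x, hx⟩ := this (Fintype.card V)
  have := Fintype.card_le_of_injective (fun i : Fin (Fintype.card V + 1) => x i) (by
    intro i j h
    exact Fin.ext (hx.2 i (by omega) j (by omega) h))
  simp at this

lemma isolation_le {V : Type*} [Fintype V] (G : SimpleGraph V) (S : Finset V)
    (h : IsIsolatingSet G (S : Set V)) : isolationNumber G ≤ S.card := by
  apply Nat.sInf_le
  exact ⟨S, h, by simp⟩

lemma le_of_color {V : Type*} [Fintype V] (G : SimpleGraph V) (f : V → ZMod 3)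
    (h : ∀ u v, G.Adj u v → ∀ c, ∃ w, ((w = u ∨ G.Adj u w) ∨ (w = v ∨ G.Adj v w)) ∧ f w = c) :
    3 * isolationNumber G ≤ Fintype.card V := by
  have hc : ∀ c, isolationNumber G ≤ (Finset.univ.filter (fun v => f v = c)).card := by
    intro c
    apply isolation_le
    intro u v huv
    obtain ⟨w, hw, hwc⟩ := h u v huv c
    have hwS : w ∈ ((Finset.univ.filter (fun v => f v = c) : Finset V) : Set V) := by simp [hwc]
    rcases hw with (rfl | hw) | (rfl | hw)
    · exact Or.inl (Or.inl hwS)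
    · exact Or.inl (Or.inr ⟨w, hwS, hw.symm⟩)
    · exact Or.inr (Or.inl hwS)
    · exact Or.inr (Or.inr ⟨w, hwS, hw.symm⟩)
  have hsum := Finset.card_eq_sum_card_fiberwise (s := (Finset.univ : Finset V))
    (t := (Finset.univ : Finset (ZMod 3))) (f := f) (by simp)
  have := Finset.sum_le_sum (fun c (_ : c ∈ (Finset.univ : Finset (ZMod 3))) => hc c)
  rw [← hsum] at this
  simpa [ZMod.card] using this

lemma exists_cross {V : Type*} (G : SimpleGraph V) (hG : G.Connected) (B : Finset V)
    (p : V) (hp : p ∉ B) (v : V) (hv : v ∈ B) :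
    ∃ w ∈ B, Relation.ReflTransGen (Rel G B) w v ∧ ∃ q, q ∉ B ∧ G.Adj q w := by
  have hr : Relation.ReflTransGen G.Adj p v :=
    (SimpleGraph.reachable_iff_reflTransGen p v).mp (hG.preconnected p v)
  induction hr with
  | refl => exact absurd hv hp
  | tail hab hbc ih =>
    rename_i b c
    by_cases hb : b ∈ B
    · obtain ⟨w, hw, h1, h2⟩ := ih hb
      exact ⟨w, hw, h1.tail ⟨hbc, hb, hv⟩, h2⟩
    · exact ⟨c, hv, .refl, b, hb, hbc⟩

lemma path_case {V : Type*} [Fintype V] (G : SimpleGraph V) (hG : G.Connected)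
    (x : ℕ → V) (m : ℕ) (hx : IsP G x m) (hmax : ∀ y, ¬ IsP G y (m + 1))
    (hgood : ¬ (G.Adj (x 0) (x m) ∧ m % 3 = 1)) :
    3 * isolationNumber G ≤ Fintype.card V := by
  have h0 : ∀ v, G.Adj (x 0) v → ∃ i ≤ m, x i = v := by
    intro v hv
    by_contra hno
    push Not at hno
    apply hmax (fun i => if i = 0 then v else x (i - 1))
    constructor
    · intro i hi
      rcases i with _ | i
      · simpa using hv.symm
      · simpa using hx.1 i (by omega)
    · intro i hi j hj hij
      rcases i with _ | i <;> rcases j with _ | j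
      · rfl
      · simp at hij
        exact absurd hij.symm (hno j (by omega))
      · simp at hij
        exact absurd hij (hno i (by omega))
      · simp at hij
        rw [hx.2 i (by omega) j (by omega) hij]
  have hm : ∀ v, G.Adj (x m) v → ∃ i ≤ m, x i = v := by
    intro v hv
    by_contra hno
    push Not at hno
    apply hmax (fun i => if i ≤ m then x i else v)
    constructor
    · intro i hi
      by_cases him : i = m
      · subst him; simpa using hv
      · have h1 : i ≤ m := by omega
        have h2 : i + 1 ≤ m := by omega
        simp only [h1, h2, if_true]
        exact hx.1 i (by omega)
    · intro i hi j hj hij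
      by_cases h1 : i ≤ m <;> by_cases h2 : j ≤ m <;> simp only [h1, h2, if_true, if_false] at hij
      · exact hx.2 i h1 j h2 hij
      · exact absurd hij (hno i h1)
      · exact absurd hij.symm (hno j h2)
      · omega
  obtain ⟨g, hg⟩ : ∃ g : V → ZMod 3, ∀ i ≤ m, g (x i) = i := by
    refine ⟨fun v => if h : ∃ i ≤ m, x i = v then ((h.choose : ℕ) : ZMod 3) else 0, ?_⟩
    intro i hi
    have h : ∃ j ≤ m, x j = x i := ⟨i, hi, rfl⟩
    simp only [dif_pos h]
    rw [hx.2 _ h.choose_spec.1 i hi h.choose_spec.2]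
  set B : Finset V := Finset.univ.filter (fun v => ¬ ∃ i ≤ m, x i = v) with hB
  have hxB : ∀ i ≤ m, x i ∉ B := by
    intro i hi h
    simp only [hB, Finset.mem_filter] at h
    exact h.2 ⟨i, hi, rfl⟩
  have hBx : ∀ v, v ∉ B → ∃ i ≤ m, x i = v := by
    intro v hv
    by_contra h
    exact hv (by simp only [hB, Finset.mem_filter]; exact ⟨Finset.mem_univ _, h⟩)
  obtain ⟨f, hf, hfe, -⟩ := forest G _ B le_rfl g {v | v ∉ B} (fun q hq => hq)
    (fun v hv => exists_cross G hG B (x 0) (hxB 0 (by omega)) v hv)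
  have hfx : ∀ i ≤ m, f (x i) = i := fun i hi => by rw [hf _ (hxB i hi), hg i hi]
  have hint : ∀ i, 0 < i → i < m → Full G f (x i) := by
    intro i h1 h2
    obtain ⟨j, rfl⟩ : ∃ j, i = j + 1 := ⟨i - 1, by omega⟩
    refine full_of (hx.1 j (by omega)).symm (hx.1 (j + 1) h2) ?_ ?_
    · rw [hfx _ (by omega), hfx _ (by omega)]; push_cast; rfl
    · rw [hfx _ (by omega), hfx _ (by omega)]; push_cast; rfl
  have hends : G.Adj (x 0) (x m) → ∀ c, ∃ w, ((w = x 0 ∨ G.Adj (x 0) w) ∨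
      (w = x m ∨ G.Adj (x m) w)) ∧ f w = c := by
    intro hadj c
    have hm0 : 0 < m := by
      rcases Nat.eq_zero_or_pos m with h | h
      · subst h; exact absurd hadj (G.irrefl)
      · exact h
    have hm1 : m % 3 ≠ 1 := fun h => hgood ⟨hadj, h⟩
    have e0 := hfx 0 (by omega)
    have e1 := hfx 1 (by omega)
    rcases three 0 c with h | h | h
    · exact ⟨x 0, by simp, by rw [e0, h]; simp⟩
    · exact ⟨x 1, Or.inl (Or.inr (hx.1 0 hm0)), by rw [e1, h]; simp⟩
    · by_cases h2 : m % 3 = 2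
      · refine ⟨x m, by simp, ?_⟩
        rw [hfx m le_rfl, h]
        have : ((m : ℕ) : ZMod 3) = ((2 : ℕ) : ZMod 3) :=
          (ZMod.natCast_eq_natCast_iff' _ _ _).mpr h2
        rw [this]; decide
      · refine ⟨x (m - 1), Or.inr (Or.inr ?_), ?_⟩
        · have := hx.1 (m - 1) (by omega)
          rw [Nat.sub_add_cancel hm0] at this
          exact this.symm
        · rw [hfx (m - 1) (by omega), h]
          have : ((m - 1 : ℕ) : ZMod 3) = ((2 : ℕ) : ZMod 3) :=
            (ZMod.natCast_eq_natCast_iff' _ _ _).mpr (by omega)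
          rw [this]; decide
  apply le_of_color G f
  have goL : ∀ u v, Full G f u → ∀ c, ∃ w, ((w = u ∨ G.Adj u w) ∨ (w = v ∨ G.Adj v w)) ∧ f w = c :=
    fun u v h c => by obtain ⟨w, h1, h2⟩ := h c; exact ⟨w, Or.inl h1, h2⟩
  have goR : ∀ u v, Full G f v → ∀ c, ∃ w, ((w = u ∨ G.Adj u w) ∨ (w = v ∨ G.Adj v w)) ∧ f w = c :=
    fun u v h c => by obtain ⟨w, h1, h2⟩ := h c; exact ⟨w, Or.inr h1, h2⟩
  have offP : ∀ i ≤ m, ∀ v, v ∈ B → G.Adj (x i) v → Full G f (x i) := by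
    intro i hi v hv hadj
    have a1 : i ≠ 0 := by
      rintro rfl
      obtain ⟨j, hj, rfl⟩ := h0 v hadj
      exact hxB j hj hv
    have a2 : i ≠ m := by
      rintro rfl
      obtain ⟨j, hj, rfl⟩ := hm v hadj
      exact hxB j hj hv
    exact hint i (by omega) (by omega)
  intro u v huv
  by_cases hu : u ∈ B <;> by_cases hv : v ∈ B
  · rcases hfe u v hu hv huv with h | h
    · exact goL u v h
    · exact goR u v h
  · obtain ⟨i, hi, rfl⟩ := hBx v hv
    exact goR _ _ (offP i hi u hu huv.symm)
  · obtain ⟨i, hi, rfl⟩ := hBx u hu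
    exact goL _ _ (offP i hi v hv huv)
  · obtain ⟨i, hi, rfl⟩ := hBx u hu
    obtain ⟨j, hj, rfl⟩ := hBx v hv
    by_cases hi' : 0 < i ∧ i < m
    · exact goL _ _ (hint i hi'.1 hi'.2)
    by_cases hj' : 0 < j ∧ j < m
    · exact goR _ _ (hint j hj'.1 hj'.2)
    have hij : i ≠ j := by rintro rfl; exact absurd huv G.irrefl
    have : (i = 0 ∧ j = m) ∨ (i = m ∧ j = 0) := by omega
    rcases this with ⟨rfl, rfl⟩ | ⟨rfl, rfl⟩
    · exact hends huv
    · intro c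
      obtain ⟨w, h1, h2⟩ := hends huv.symm c
      exact ⟨w, h1.symm, h2⟩

lemma ham {V : Type*} [Fintype V] (G : SimpleGraph V) (hG : G.Connected)
    (x : ℕ → V) (m : ℕ) (hx : IsP G x m) (hmax : ∀ y, ¬ IsP G y (m + 1))
    (hadj : G.Adj (x 0) (x m)) (v : V) : ∃ i ≤ m, x i = v := by
  by_contra hno
  set B : Finset V := Finset.univ.filter (fun v => ¬ ∃ i ≤ m, x i = v) with hB
  obtain ⟨y, hy, -, q, hq, hqy⟩ := exists_cross G hG B (x 0)
    (by simp only [hB, Finset.mem_filter]; intro h; exact h.2 ⟨0, by omega, rfl⟩) v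
    (by simp only [hB, Finset.mem_filter]; exact ⟨Finset.mem_univ _, hno⟩)
  simp only [hB, Finset.mem_filter, Finset.mem_univ, true_and, not_not] at hy hq
  obtain ⟨i, hi, rfl⟩ := hq
  push Not at hy
  apply hmax (fun j => if j = 0 then y else x ((i + (j - 1)) % (m + 1)))
  have hlt : ∀ a, a % (m + 1) ≤ m := fun a => Nat.lt_succ_iff.mp (Nat.mod_lt _ (by omega))
  constructor
  · intro j hj
    rcases j with _ | j
    · simpa [Nat.mod_eq_of_lt (show i < m + 1 by omega)] using hqy.symm
    · simp only [Nat.add_eq_zero_iff, one_ne_zero, and_false, if_false, Nat.add_sub_cancel]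
      by_cases h : (i + j) % (m + 1) = m
      · have : (i + (j + 1)) % (m + 1) = 0 := by
          rw [← Nat.add_assoc, Nat.add_mod, h]
          by_cases hm0 : m = 0
          · subst hm0; simp
          · rw [Nat.mod_eq_of_lt (show 1 < m + 1 by omega)]; simp
        rw [h, this]; exact hadj.symm
      · have h' := hlt (i + j)
        have : (i + (j + 1)) % (m + 1) = (i + j) % (m + 1) + 1 := by
          rw [← Nat.add_assoc, Nat.add_mod, Nat.mod_eq_of_lt (show 1 < m + 1 by omega),
            Nat.mod_eq_of_lt (show (i + j) % (m + 1) + 1 < m + 1 by omega)]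
        rw [this]
        exact hx.1 _ (by omega)
  · intro a ha b hb hab
    rcases a with _ | a <;> rcases b with _ | b
    · rfl
    · simp at hab
      exact absurd hab.symm (hy _ (hlt _))
    · simp at hab
      exact absurd hab (hy _ (hlt _))
    · simp at hab
      have := hx.2 _ (hlt _) _ (hlt _) hab
      have h2 : a ≡ b [MOD (m + 1)] := Nat.ModEq.add_left_cancel' i this
      have h3 := Nat.ModEq.eq_of_lt_of_lt h2 (by omega) (by omega)
      omega

lemma iso_of_cover {V : Type*} [Fintype V] (G : SimpleGraph V) (S : Finset V) (k : ℕ)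
    (hS : S.card ≤ k) (a b : V) (hab : ¬ G.Adj a b)
    (h : ∀ v, v ≠ a → v ≠ b → ∃ s ∈ S, v = s ∨ G.Adj s v) :
    isolationNumber G ≤ k := by
  refine (isolation_le G S ?_).trans hS
  have h' : ∀ v, v ≠ a → v ≠ b → v ∈ closedNbhd G (S : Set V) := by
    intro v h1 h2
    obtain ⟨s, hs, rfl | h3⟩ := h v h1 h2
    · exact Or.inl hs
    · exact Or.inr ⟨s, hs, h3⟩
  intro u v huv
  by_contra hcon
  push Not at hcon
  have hu : u = a ∨ u = b := by
    by_contra hh; push Not at hh; exact hcon.1 (h' u hh.1 hh.2)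
  have hv : v = a ∨ v = b := by
    by_contra hh; push Not at hh; exact hcon.2 (h' v hh.1 hh.2)
  rcases hu with rfl | rfl <;> rcases hv with rfl | rfl
  · exact G.irrefl huv
  · exact hab huv
  · exact hab huv.symm
  · exact G.irrefl huv

/-- cyclic case, n = 3k+2, k at least 2 -/
lemma cyc {V : Type*} [Fintype V] (G : SimpleGraph V) (X : ℕ → V) (k : ℕ) (hk : 2 ≤ k)
    (hper : ∀ i, X (i + (3 * k + 2)) = X i) (hadj : ∀ i, G.Adj (X i) (X (i + 1)))
    (hsurj : ∀ a v, ∃ i < 3 * k + 2, X (a + i) = v) : isolationNumber G ≤ k := by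
  have near : ∀ a s i, s = i + 1 ∨ s = i ∨ i = s + 1 →
      X (a + i) = X (a + s) ∨ G.Adj (X (a + s)) (X (a + i)) := by
    intro a s i h
    rcases h with rfl | rfl | rfl
    · exact Or.inr (hadj (a + i)).symm
    · exact Or.inl rfl
    · exact Or.inr (hadj (a + s))
  by_cases hA : ∃ a, ¬ G.Adj (X a) (X (a + 4))
  · obtain ⟨a, ha⟩ := hA
    refine iso_of_cover G
      (insert (X (a + 2)) ((Finset.range (k - 1)).image (fun t => X (a + (6 + 3 * t))))) k
      ?_ _ _ ha ?_
    · have h1 := Finset.card_insert_le (X (a + 2))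
        ((Finset.range (k - 1)).image (fun t => X (a + (6 + 3 * t))))
      have h2 := Finset.card_image_le (s := Finset.range (k - 1))
        (f := fun t => X (a + (6 + 3 * t)))
      rw [Finset.card_range] at h2
      omega
    · intro v hv0 hv4
      obtain ⟨i, hi, rfl⟩ := hsurj a v
      have hi0 : i ≠ 0 := by rintro rfl; exact hv0 rfl
      have hi4 : i ≠ 4 := by rintro rfl; exact hv4 rfl
      by_cases hi3 : i ≤ 3
      · refine ⟨X (a + 2), by simp, ?_⟩
        have : i = 1 ∨ i = 2 ∨ i = 3 := by omega
        rcases this with rfl | rfl | rfl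
        · exact Or.inr (hadj (a + 1)).symm
        · exact Or.inl rfl
        · exact Or.inr (hadj (a + 2))
      · refine ⟨X (a + (6 + 3 * ((i - 5) / 3))), ?_, ?_⟩
        · refine Finset.mem_insert_of_mem (Finset.mem_image.mpr ⟨(i - 5) / 3, ?_, rfl⟩)
          rw [Finset.mem_range]; omega
        · exact near a _ _ (by omega)
  · push Not at hA
    refine iso_of_cover G
      (insert (X 0) (insert (X 2) ((Finset.range (k - 2)).image (fun t => X (0 + (6 + 3 * t)))))) k
      ?_ (X (0 + (3 * k - 1))) (X (0 + (3 * k - 1))) G.irrefl ?_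
    · have h0 := Finset.card_insert_le (X 0)
        (insert (X 2) ((Finset.range (k - 2)).image (fun t => X (0 + (6 + 3 * t)))))
      have h1 := Finset.card_insert_le (X 2)
        ((Finset.range (k - 2)).image (fun t => X (0 + (6 + 3 * t))))
      have h2 := Finset.card_image_le (s := Finset.range (k - 2))
        (f := fun t => X (0 + (6 + 3 * t)))
      rw [Finset.card_range] at h2
      omega
    · intro v hv _
      obtain ⟨i, hi, rfl⟩ := hsurj 0 v
      have hi' : i ≠ 3 * k - 1 := by rintro rfl; exact hv rfl
      by_cases hA0 : i = 0 ∨ i = 1 ∨ i = 4 ∨ i = 3 * k + 1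
      · refine ⟨X 0, by simp, ?_⟩
        rcases hA0 with rfl | rfl | rfl | rfl
        · exact Or.inl rfl
        · exact Or.inr (hadj 0)
        · exact Or.inr (hA 0)
        · right
          have h1 := hadj (0 + (3 * k + 1))
          have h2 := hper 0
          rw [show 0 + (3 * k + 2) = 0 + (3 * k + 1) + 1 by omega] at h2
          rw [h2] at h1
          exact h1.symm
      by_cases hA2 : i = 2 ∨ i = 3 ∨ i = 3 * k
      · refine ⟨X 2, by simp, ?_⟩
        rcases hA2 with rfl | rfl | rfl
        · exact Or.inl rfl
        · exact Or.inr (hadj 2)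
        · right
          have h1 := hA (0 + 3 * k)
          have h2 := hper 2
          rw [show 2 + (3 * k + 2) = 0 + 3 * k + 4 by omega] at h2
          rw [h2] at h1
          exact h1.symm
      · refine ⟨X (0 + (6 + 3 * ((i - 5) / 3))), ?_, ?_⟩
        · refine Finset.mem_insert_of_mem (Finset.mem_insert_of_mem
            (Finset.mem_image.mpr ⟨(i - 5) / 3, ?_, rfl⟩))
          rw [Finset.mem_range]; omega
        · exact near 0 _ _ (by omega)

lemma five {V : Type*} [Fintype V] (G : SimpleGraph V) (X : ℕ → V)
    (hper : ∀ i, X (i + 5) = X i) (hadj : ∀ i, G.Adj (X i) (X (i + 1)))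
    (hsurj : ∀ a v, ∃ i < 5, X (a + i) = v)
    (hinj : ∀ i < 5, ∀ j < 5, X i = X j → i = j)
    (hC5 : ¬ Nonempty (G ≃g SimpleGraph.cycleGraph 5)) : isolationNumber G ≤ 1 := by
  by_cases hA : ∃ a, G.Adj (X a) (X (a + 2))
  · obtain ⟨a, ha⟩ := hA
    refine iso_of_cover G {X a} 1 (by simp) (X (a + 3)) (X (a + 3)) G.irrefl ?_
    intro v hv _
    refine ⟨X a, by simp, ?_⟩
    obtain ⟨i, hi, rfl⟩ := hsurj a v
    interval_cases i
    · exact Or.inl rfl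
    · exact Or.inr (hadj a)
    · exact Or.inr ha
    · exact absurd rfl hv
    · right
      have h1 := hadj (a + 4)
      have h2 := hper a
      rw [show a + 4 + 1 = a + 5 by omega, h2] at h1
      exact h1.symm
  · exfalso
    push Not at hA
    apply hC5
    have hbij : Function.Bijective (fun i : Fin 5 => X i) := by
      constructor
      · intro i j h
        exact Fin.ext (hinj i i.2 j j.2 h)
      · intro v
        obtain ⟨i, hi, h⟩ := hsurj 0 v
        exact ⟨⟨i, hi⟩, by simpa using h⟩
    have a0 := hadj 0
    have a1 := hadj 1
    have a2 := hadj 2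
    have a3 := hadj 3
    have a4 := hadj 4
    have b0 := hA 0
    have b1 := hA 1
    have b2 := hA 2
    have b3 := hA 3
    have b4 := hA 4
    have p0 := hper 0
    have p1 := hper 1
    simp only [Nat.reduceAdd] at a0 a1 a2 a3 a4 b0 b1 b2 b3 b4 p0 p1
    rw [p0] at a4 b3
    rw [p1] at b4
    refine ⟨(RelIso.mk (Equiv.ofBijective _ hbij) ?_ : SimpleGraph.cycleGraph 5 ≃g G).symm⟩
    intro i j
    have key : (SimpleGraph.cycleGraph 5).Adj i j ↔ (i - j = 1 ∨ j - i = 1) := by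
      exact SimpleGraph.cycleGraph_adj
    rw [key]
    fin_cases i <;> fin_cases j <;>
      simp [a0, a1, a2, a3, a4, b0, b1, b2, b3, b4, a0.symm, a1.symm, a2.symm, a3.symm, a4.symm,
        G.adj_comm (X 2) (X 0), G.adj_comm (X 3) (X 1), G.adj_comm (X 4) (X 2),
        G.adj_comm (X 0) (X 3), G.adj_comm (X 1) (X 4)] <;> first | decide | grind [SimpleGraph.adj_comm]

end IsoProof

/-- If `G` is a connected graph of order `n` other than `K₂` and `C₅`,
then `ι(G) ≤ n/3`. -/
theorem isolation_number_le_third {V : Type*} [Fintype V] (G : SimpleGraph V) (n : ℕ)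
    (hn : Fintype.card V = n) (hconn : G.Connected)
    (hK2 : ¬ Nonempty (G ≃g (⊤ : SimpleGraph (Fin 2))))
    (hC5 : ¬ Nonempty (G ≃g SimpleGraph.cycleGraph 5)) :
    (isolationNumber G : ℝ) ≤ n / 3 := by
  subst hn
  have : 3 * isolationNumber G ≤ Fintype.card V := by
    haveI := hconn.nonempty
    obtain ⟨x, m, hx, hmax⟩ := IsoProof.exists_longest G
    by_cases hgood : G.Adj (x 0) (x m) ∧ m % 3 = 1
    swap
    · exact IsoProof.path_case G hconn x m hx hmax hgood
    obtain ⟨hadj, hm⟩ := hgood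
    have hsur := IsoProof.ham G hconn x m hx hmax hadj
    have hbij : Function.Bijective (fun i : Fin (m + 1) => x i) := by
      constructor
      · intro i j h
        exact Fin.ext (hx.2 i (by omega) j (by omega) h)
      · intro v
        obtain ⟨i, hi, h⟩ := hsur v
        exact ⟨⟨i, by omega⟩, h⟩
    have hcard : Fintype.card V = m + 1 := by
      rw [← Fintype.card_of_bijective hbij]; simp
    obtain ⟨k, rfl⟩ : ∃ k, m = 3 * k + 1 := ⟨m / 3, by omega⟩
    set X : ℕ → V := fun i => x (i % (3 * k + 2)) with hX
    have hXlt : ∀ i < 3 * k + 2, X i = x i := fun i hi => by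
      simp only [hX]; rw [Nat.mod_eq_of_lt hi]
    have hper : ∀ i, X (i + (3 * k + 2)) = X i := fun i => by simp [hX]
    have hXadj : ∀ i, G.Adj (X i) (X (i + 1)) := by
      intro i
      have hlt := Nat.mod_lt i (show 0 < 3 * k + 2 by omega)
      simp only [hX]
      rw [Nat.add_mod, Nat.mod_eq_of_lt (show 1 < 3 * k + 2 by omega)]
      by_cases h : i % (3 * k + 2) = 3 * k + 1
      · rw [h, Nat.mod_self]; exact hadj.symm
      · rw [Nat.mod_eq_of_lt (show i % (3 * k + 2) + 1 < 3 * k + 2 by omega)]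
        exact hx.1 _ (by omega)
    have hXsurj : ∀ a v, ∃ i < 3 * k + 2, X (a + i) = v := by
      intro a v
      obtain ⟨j, hj, rfl⟩ := hsur v
      have hlt := Nat.mod_lt a (show 0 < 3 * k + 2 by omega)
      refine ⟨(j + (3 * k + 2 - a % (3 * k + 2))) % (3 * k + 2), Nat.mod_lt _ (by omega), ?_⟩
      simp only [hX]
      congr 1
      rw [Nat.add_mod_mod, ← Nat.mod_add_mod,
        show a % (3 * k + 2) + (j + (3 * k + 2 - a % (3 * k + 2))) = j + (3 * k + 2) by omega,
        Nat.add_mod_right, Nat.mod_eq_of_lt (by omega)]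
    have hXinj : ∀ i < 3 * k + 2, ∀ j < 3 * k + 2, X i = X j → i = j := by
      intro i hi j hj h
      rw [hXlt i hi, hXlt j hj] at h
      exact hx.2 i (by omega) j (by omega) h
    rcases Nat.lt_or_ge 1 k with hk | hk
    · have := IsoProof.cyc G X k hk hper hXadj hXsurj
      omega
    · interval_cases k
      · exfalso
        apply hK2
        refine ⟨(RelIso.mk (Equiv.ofBijective _ hbij) ?_ : (⊤ : SimpleGraph (Fin 2)) ≃g G).symm⟩
        intro i j
        simp only [mul_zero, zero_add] at hadj
        fin_cases i <;> fin_cases j <;> simp [hadj, hadj.symm]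
      · have := IsoProof.five G X hper hXadj hXsurj hXinj hC5
        omega
  have h2 : (3 : ℝ) * isolationNumber G ≤ Fintype.card V := by exact_mod_cast this
  linarith
end

section
/- If G is a graph of order n with minimum degree at least 4, then ι(G) ≤ 13n/41. -/
open Classical

namespace Iso

variable {V : Type*} [Fintype V]

/-- number of neighbours of `v` in `W` -/
noncomputable def dg (G : SimpleGraph V) (W : Finset V) (v : V) : ℕ := (W.filter (G.Adj v)).card

def bb : ℕ → ℤ
  | 0 => 0
  | 1 => 5
  | 2 => 10
  | 3 => 12
  | _ => 14

noncomputable def wt (G : SimpleGraph V) (W : Finset V) (v : V) : ℤ :=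
  if v ∈ W then 26 else bb (dg G W v)

noncomputable def pot (G : SimpleGraph V) (W : Finset V) : ℤ := ∑ v, wt G W v

def Cov (G : SimpleGraph V) (S : Finset V) (u : V) : Prop := u ∈ S ∨ ∃ s ∈ S, G.Adj s u

def Red (G : SimpleGraph V) (W : Finset V) : Prop :=
  ∃ R T : Finset V, R ⊆ W ∧ R.Nonempty ∧
    (∀ r ∈ R, Cov G T r ∨ ∀ w ∈ W, G.Adj r w → Cov G T w) ∧
    pot G (W \ R) + 82 * T.card ≤ pot G W

lemma bb_nonneg (i : ℕ) : 0 ≤ bb i := by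
  unfold bb; split <;> norm_num

lemma bb_le (i : ℕ) : bb i ≤ 14 := by
  unfold bb; split <;> norm_num

lemma bb_big {i : ℕ} (h : 4 ≤ i) : bb i = 14 := by
  unfold bb; split <;> omega

lemma bb_mono {i j : ℕ} (h : i ≤ j) : bb i ≤ bb j := by
  by_cases hj : 4 ≤ j
  · rw [bb_big hj]; unfold bb; split <;> norm_num
  · have : j ≤ 3 := by omega
    interval_cases j <;> interval_cases i <;> simp [bb]

lemma bb_rate2 {i j k : ℕ} (h : i ≤ 4) (hk : k + j = i) : bb i - bb k ≥ 2 * j := by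
  have : j ≤ 4 := by omega
  have : k ≤ 4 := by omega
  subst hk
  interval_cases j <;> interval_cases k <;> simp [bb] <;> omega

lemma bb_ge4 {i : ℕ} (h : i ≤ 3) : bb i ≥ 4 * i := by
  interval_cases i <;> simp [bb]

lemma bb_ge5 {i : ℕ} (h : i ≤ 2) : bb i ≥ 5 * i := by
  interval_cases i <;> simp [bb]

variable {G : SimpleGraph V} {W R T : Finset V}

lemma dg_split (hR : R ⊆ W) (v : V) : dg G (W \ R) v + dg G R v = dg G W v := by
  unfold dg
  rw [← Finset.card_union_of_disjoint]
  · congr 1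
    ext x; simp only [Finset.mem_union, Finset.mem_filter, Finset.mem_sdiff]
    have := @hR x
    tauto
  · rw [Finset.disjoint_left]
    intro x; simp only [Finset.mem_filter, Finset.mem_sdiff]; tauto

lemma dg_le (hR : R ⊆ W) (v : V) : dg G (W \ R) v ≤ dg G W v := by
  have := dg_split (G := G) hR v; omega

lemma dg_pos {v x : V} (hx : x ∈ R) (h : G.Adj v x) : 1 ≤ dg G R v := by
  unfold dg
  exact Finset.card_pos.mpr ⟨x, by simp [hx, h]⟩

lemma dg_lt (hR : R ⊆ W) {v x : V} (hx : x ∈ R) (h : G.Adj v x) :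
    dg G (W \ R) v + 1 ≤ dg G W v := by
  have := dg_split (G := G) hR v
  have := dg_pos (G := G) hx h
  omega

lemma dg_zero {v : V} (h : ∀ w ∈ W, G.Adj v w → w ∈ R) : dg G (W \ R) v = 0 := by
  unfold dg
  rw [Finset.card_eq_zero, Finset.filter_eq_empty_iff]
  intro x hx; rw [Finset.mem_sdiff] at hx
  exact fun ha => hx.2 (h x hx.1 ha)

lemma dg_eq_zero {v : V} (h : ∀ w ∈ W, ¬ G.Adj v w) : dg G W v = 0 := by
  unfold dg
  rw [Finset.card_eq_zero, Finset.filter_eq_empty_iff]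
  intro x hx
  exact h x hx

lemma dg_compl (hmin : ∀ v : V, 4 ≤ (G.neighborSet v).ncard) (W : Finset V) (v : V) :
    (4 : ℤ) - dg G W v ≤ dg G (Wᶜ) v := by
  have h1 := dg_split (G := G) (Finset.subset_univ W) v
  rw [← Finset.compl_eq_univ_sdiff] at h1
  have h2 : dg G Finset.univ v = (G.neighborSet v).ncard := by
    unfold dg
    rw [Set.ncard_eq_toFinset_card']
    congr 1
    ext x; simp
  have := hmin v
  omega

lemma dg_swap (G : SimpleGraph V) (A B : Finset V) : ∑ a ∈ A, dg G B a = ∑ b ∈ B, dg G A b := by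
  unfold dg
  have := Finset.sum_card_bipartiteAbove_eq_sum_card_bipartiteBelow (s := A) (t := B) G.Adj
  simp only [Finset.bipartiteAbove, Finset.bipartiteBelow] at this
  rw [this]
  simp only [G.adj_comm]

lemma pot_loss (hmin : ∀ v : V, 4 ≤ (G.neighborSet v).ncard) (hR : R ⊆ W) (c : ℤ) (hc : 0 ≤ c)
    (h g : V → ℤ)
    (hl : ∀ v, v ∉ W → bb (dg G W v) - bb (dg G (W \ R) v) ≥ c * dg G R v + h v)
    (hg : ∀ r ∈ R, g r ≤ 26 - bb (dg G (W \ R) r) + c * (4 - dg G W r)) :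
    pot G (W \ R) + (∑ r ∈ R, g r + ∑ v ∈ Wᶜ, h v) ≤ pot G W := by
  have key : ∀ A : Finset V, pot G A = ∑ v ∈ W \ R, wt G A v + ∑ v ∈ R, wt G A v
      + ∑ v ∈ Wᶜ, wt G A v := by
    intro A
    unfold pot
    rw [Finset.sum_sdiff hR, Finset.sum_add_sum_compl]
  rw [key (W \ R), key W]
  have e1 : ∑ v ∈ W \ R, wt G (W \ R) v = ∑ v ∈ W \ R, wt G W v := by
    apply Finset.sum_congr rfl
    intro x hx
    have := (Finset.mem_sdiff.mp hx).1
    simp [wt, hx, this]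
  have e2 : ∑ r ∈ R, (wt G (W \ R) r + g r) ≤ ∑ r ∈ R, (wt G W r + c * dg G (Wᶜ) r) := by
    apply Finset.sum_le_sum
    intro r hr
    have h1 := hR hr
    have h2 : r ∉ W \ R := by simp [hr]
    have h3 := hg r hr
    have h4 := mul_le_mul_of_nonneg_left (dg_compl hmin W r) hc
    simp only [wt, h1, h2, if_true, if_false]
    linarith
  have e3 : ∑ v ∈ Wᶜ, (wt G (W \ R) v + (c * dg G R v + h v)) ≤ ∑ v ∈ Wᶜ, wt G W v := by
    apply Finset.sum_le_sum
    intro v hv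
    have h1 : v ∉ W := by simpa using hv
    have h2 : v ∉ W \ R := by simp [h1]
    have := hl v h1
    simp only [wt, h1, h2, if_false]
    linarith
  have e4 : ∑ r ∈ R, (c * dg G (Wᶜ) r) = ∑ v ∈ Wᶜ, (c * dg G R v) := by
    rw [← Finset.mul_sum, ← Finset.mul_sum]
    congr 1
    exact_mod_cast dg_swap G R Wᶜ
  simp only [Finset.sum_add_distrib] at e2 e3
  linarith

lemma red_of (hmin : ∀ v : V, 4 ≤ (G.neighborSet v).ncard) (R T : Finset V) (hR : R ⊆ W)
    (hne : R.Nonempty)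
    (hcov : ∀ r ∈ R, Cov G T r ∨ ∀ w ∈ W, G.Adj r w → Cov G T w)
    (c : ℤ) (hc : 0 ≤ c) (g : V → ℤ)
    (hl : ∀ v, v ∉ W → bb (dg G W v) - bb (dg G (W \ R) v) ≥ c * dg G R v)
    (hg : ∀ r ∈ R, g r ≤ 26 - bb (dg G (W \ R) r) + c * (4 - dg G W r))
    (hs : 82 * (T.card : ℤ) ≤ ∑ r ∈ R, g r) : Red G W := by
  refine ⟨R, T, hR, hne, hcov, ?_⟩
  have := pot_loss hmin hR c hc (fun _ => 0) g (by simpa using hl) hg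
  simp only [Finset.sum_const_zero] at this
  linarith

/-- no blue information -/
lemma red_of0 (hmin : ∀ v : V, 4 ≤ (G.neighborSet v).ncard) (R T : Finset V) (hR : R ⊆ W)
    (hne : R.Nonempty)
    (hcov : ∀ r ∈ R, Cov G T r ∨ ∀ w ∈ W, G.Adj r w → Cov G T w) (g : V → ℤ)
    (hg : ∀ r ∈ R, g r ≤ 26 - bb (dg G (W \ R) r))
    (hs : 82 * (T.card : ℤ) ≤ ∑ r ∈ R, g r) : Red G W := by
  refine red_of hmin R T hR hne hcov 0 le_rfl g ?_ (by simpa using hg) hs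
  intro v _
  have := bb_mono (dg_le (G := G) hR v)
  linarith

lemma red_of2 (hmin : ∀ v : V, 4 ≤ (G.neighborSet v).ncard)
    (hb : ∀ v, v ∉ W → dg G W v ≤ 4) (R T : Finset V) (hR : R ⊆ W)
    (hne : R.Nonempty)
    (hcov : ∀ r ∈ R, Cov G T r ∨ ∀ w ∈ W, G.Adj r w → Cov G T w) (g : V → ℤ)
    (hg : ∀ r ∈ R, g r ≤ 26 - bb (dg G (W \ R) r) + 2 * (4 - dg G W r))
    (hs : 82 * (T.card : ℤ) ≤ ∑ r ∈ R, g r) : Red G W := by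
  refine red_of hmin R T hR hne hcov 2 (by norm_num) g ?_ hg hs
  intro v hv
  exact bb_rate2 (hb v hv) (dg_split hR v)

/-- choosing an outside vertex `u`, with all its white neighbours removed -/
lemma red_blue (hmin : ∀ v : V, 4 ≤ (G.neighborSet v).ncard) (u : V) (hu : u ∉ W)
    (hpos : 1 ≤ dg G W u) (c β γ : ℤ) (hc : 0 ≤ c) 
    (hl : ∀ v, v ∉ W → ∀ R ⊆ W, bb (dg G W v) - bb (dg G (W \ R) v) ≥ c * dg G R v)
    (hlu : bb (dg G W u) ≥ c * dg G W u + β)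
    (hg : ∀ r ∈ W, γ ≤ 26 - bb (dg G W r) + c * (4 - dg G W r))
    (hs : 82 ≤ dg G W u * γ + β) : Red G W := by
  have hR : W.filter (G.Adj u) ⊆ W := Finset.filter_subset _ _
  refine ⟨W.filter (G.Adj u), {u}, hR, Finset.card_pos.mp hpos, ?_, ?_⟩
  · intro r hr
    left; right
    exact ⟨u, by simp, (Finset.mem_filter.mp hr).2⟩
  have h0 : dg G (W \ W.filter (G.Adj u)) u = 0 :=
    dg_zero (fun w hw ha => by simp [hw, ha])
  have h1 : dg G (W.filter (G.Adj u)) u = dg G W u := by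
    have := dg_split (G := G) hR u
    omega
  have := pot_loss hmin hR c hc (fun v => if v = u then β else 0) (fun _ => γ) ?_ ?_
  · have e : ∑ v ∈ Wᶜ, (if v = u then β else 0) = β := by
      rw [Finset.sum_ite_eq' ]; simp [hu]
    rw [e] at this
    simp only [Finset.sum_const, nsmul_eq_mul] at this
    have e2 : ((W.filter (G.Adj u)).card : ℤ) = dg G W u := rfl
    rw [e2] at this
    simp only [Finset.card_singleton]
    push_cast
    linarith
  · intro v hv
    by_cases hvu : v = u
    · subst hvu
      rw [h0, h1]; simp [bb] at hlu ⊢; linarith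
    · simpa [hvu] using hl v hv _ hR
  · intro r hr
    have hrW := hR hr
    have := hg r hrW
    have := bb_mono (dg_le (G := G) hR r)
    linarith

/-- choosing a white vertex `v`, removing its closed white neighbourhood -/
lemma red_white (hmin : ∀ v : V, 4 ≤ (G.neighborSet v).ncard) (v : V) (hv : v ∈ W)
    (c γ : ℤ) (hc : 0 ≤ c) 
    (hl : ∀ v, v ∉ W → ∀ R ⊆ W, bb (dg G W v) - bb (dg G (W \ R) v) ≥ c * dg G R v)
    (hg : ∀ r ∈ W, G.Adj v r → γ ≤ 26 - bb (dg G W r - 1) + c * (4 - dg G W r))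
    (hs : 82 ≤ 26 + c * (4 - dg G W v) + dg G W v * γ) : Red G W := by
  have hR : insert v (W.filter (G.Adj v)) ⊆ W :=
    Finset.insert_subset hv (Finset.filter_subset _ _)
  refine red_of hmin (insert v (W.filter (G.Adj v))) {v} hR (Finset.insert_nonempty _ _) ?_ c hc
    (fun r => if r = v then 26 + c * (4 - dg G W v) else γ) (fun x hx => hl x hx _ hR) ?_ ?_
  · intro r hr
    left
    rcases Finset.mem_insert.mp hr with h | h
    · left; simp [h]
    · right; exact ⟨v, by simp, (Finset.mem_filter.mp h).2⟩
  · intro r hr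
    rcases Finset.mem_insert.mp hr with h | h
    · subst h
      have : dg G (W \ insert r (W.filter (G.Adj r))) r = 0 :=
        dg_zero (fun w hw ha => by simp [hw, ha])
      rw [this]; simp [bb]
    · have h' := Finset.mem_filter.mp h
      have hne : r ≠ v := h'.2.ne'
      have h1 := hg r h'.1 h'.2
      have h2 := dg_lt (G := G) hR (Finset.mem_insert_self v _) h'.2.symm
      have h3 : bb (dg G (W \ insert v (W.filter (G.Adj v))) r) ≤ bb (dg G W r - 1) :=
        bb_mono (by omega)
      simp only [hne, if_false]
      linarith
  · have hnv : v ∉ W.filter (G.Adj v) := by simp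
    rw [Finset.sum_insert hnv]
    have e : ∑ r ∈ W.filter (G.Adj v), (if r = v then 26 + c * (4 - (dg G W v : ℤ)) else γ)
        = dg G W v * γ := by
      rw [Finset.sum_congr rfl (g := fun _ => γ)]
      · simp [dg]
      · intro r hr
        have : r ≠ v := by rintro rfl; exact hnv hr
        simp [this]
    rw [e]
    simpa using hs


lemma exists_nbr {x : V} (h : 1 ≤ dg G W x) : ∃ y ∈ W, G.Adj x y := by
  obtain ⟨y, hy⟩ := Finset.card_pos.mp (show 0 < (W.filter (G.Adj x)).card from h)
  exact ⟨y, (Finset.mem_filter.mp hy).1, (Finset.mem_filter.mp hy).2⟩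

lemma uniq1 {x v : V} (h : dg G W x = 1) (hv : v ∈ W) (ha : G.Adj x v) :
    ∀ w ∈ W, G.Adj x w → w = v := by
  obtain ⟨a, h⟩ := Finset.card_eq_one.mp (show (W.filter (G.Adj x)).card = 1 from h)
  have : ∀ w ∈ W, G.Adj x w → w = a := by
    intro w hw hx
    have : w ∈ W.filter (G.Adj x) := by simp [hw, hx]
    rw [h] at this; simpa using this
  intro w hw hx
  rw [this w hw hx, this v hv ha]

lemma other2 {x v : V} (h : dg G W x = 2) (hv : v ∈ W) (ha : G.Adj x v) :
    ∃ y ∈ W, y ≠ v ∧ G.Adj x y ∧ ∀ w ∈ W, G.Adj x w → w = v ∨ w = y := by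
  obtain ⟨a, b, hab, h⟩ := Finset.card_eq_two.mp (show (W.filter (G.Adj x)).card = 2 from h)
  have key : ∀ w, (w ∈ W ∧ G.Adj x w) ↔ (w = a ∨ w = b) := by
    intro w
    rw [← Finset.mem_filter, h]; simp
  rcases (key v).1 ⟨hv, ha⟩ with rfl | rfl
  · have hb := (key b).2 (Or.inr rfl)
    exact ⟨b, hb.1, hab.symm, hb.2, fun w hw hx => (key w).1 ⟨hw, hx⟩⟩
  · have hb := (key a).2 (Or.inl rfl)
    exact ⟨a, hb.1, hab, hb.2, fun w hw hx => ((key w).1 ⟨hw, hx⟩).symm⟩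

lemma bb_le5 {i : ℕ} (h : i ≤ 1) : bb i ≤ 5 := bb_mono h

structure C5 (G : SimpleGraph V) (W : Finset V) (a b c d e : V) : Prop where
  ma : a ∈ W
  mb : b ∈ W
  mc : c ∈ W
  md : d ∈ W
  me : e ∈ W
  ab : G.Adj a b
  bc : G.Adj b c
  cd : G.Adj c d
  de : G.Adj d e
  ea : G.Adj e a
  ac : a ≠ c
  bd : b ≠ d
  ce : c ≠ e
  da : d ≠ a
  eb : e ≠ b
  na : ∀ w ∈ W, G.Adj a w → w = b ∨ w = e
  nb : ∀ w ∈ W, G.Adj b w → w = c ∨ w = a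
  nc : ∀ w ∈ W, G.Adj c w → w = d ∨ w = b
  nd : ∀ w ∈ W, G.Adj d w → w = e ∨ w = c
  ne : ∀ w ∈ W, G.Adj e w → w = a ∨ w = d

lemma C5.rot {a b c d e : V} (h : C5 G W a b c d e) : C5 G W b c d e a :=
  ⟨h.mb, h.mc, h.md, h.me, h.ma, h.bc, h.cd, h.de, h.ea, h.ab, h.bd, h.ce, h.da, h.eb, h.ac,
   h.nb, h.nc, h.nd, h.ne, h.na⟩

lemma cov_self {v : V} (h : v ∈ T) : Cov G T v := Or.inl h
lemma cov_adj {v w : V} (h : v ∈ T) (ha : G.Adj v w) : Cov G T w := Or.inr ⟨v, h, ha⟩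

lemma phase_cycle (hmin : ∀ v : V, 4 ≤ (G.neighborSet v).ncard)
    (hb : ∀ v, v ∉ W → dg G W v ≤ 4) (hw : ∀ v ∈ W, dg G W v = 1 ∨ dg G W v = 2)
    (v : V) (hv : v ∈ W) (hv2 : dg G W v = 2) :
    Red G W ∨ ∃ b c d e, C5 G W v b c d e := by
  by_cases hpend : ∃ v ∈ W, dg G W v = 2 ∧ ∃ p ∈ W, G.Adj v p ∧ dg G W p = 1
  · left
    obtain ⟨v, hv, hv2, p, hp, hvp, hp1⟩ := hpend
    obtain ⟨y, hy, hyp, hvy, hvn⟩ := other2 hv2 hp hvp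
    have hpn := uniq1 hp1 hv hvp.symm
    have hR : ({v, p, y} : Finset V) ⊆ W := by
      intro x; simp; rintro (rfl | rfl | rfl) <;> assumption
    have z1 : dg G (W \ {v, p, y}) v = 0 :=
      dg_zero (fun w hw ha => by rcases hvn w hw ha with rfl | rfl <;> simp)
    have z2 : dg G (W \ {v, p, y}) p = 0 :=
      dg_zero (fun w hw ha => by rw [hpn w hw ha]; simp)
    have z3 := dg_lt (G := G) hR (v := y) (x := v) (by simp) hvy.symm
    have hy2 := hw y hy
    have z4 := bb_le5 (i := dg G (W \ {v, p, y}) y) (by omega)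
    have n1 := hvp.ne
    have n2 := hvy.ne
    refine red_of2 hmin hb {v, p, y} {v} hR (by simp) ?_
      (fun r => if r = v then 30 else if r = p then 32 else 25) ?_ ?_
    · intro r hr
      left
      simp at hr
      rcases hr with rfl | rfl | rfl
      · exact cov_self (by simp)
      · exact cov_adj (v := v) (by simp) hvp
      · exact cov_adj (v := v) (by simp) hvy
    · intro r hr
      simp at hr
      rcases hr with rfl | rfl | rfl
      · simp [z1, hv2, bb]
      · simp [z2, hp1, bb, n1.symm]
      · simp only [n2.symm, hyp, if_false]; omega
    · rw [Finset.sum_insert (by simp [n1, n2]), Finset.sum_insert (by simp [hyp.symm]),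
        Finset.sum_singleton]
      simp [n1.symm, n2.symm, hyp]
  have h22 : ∀ x ∈ W, dg G W x = 2 → ∀ y ∈ W, G.Adj x y → dg G W y = 2 := by
    intro x hx hx2 y hy hxy
    rcases hw y hy with h | h
    · exact absurd ⟨x, hx, hx2, y, hy, hxy, h⟩ hpend
    · exact h
  clear hpend
  obtain ⟨x, hx, hvx⟩ := exists_nbr (G := G) (W := W) (x := v) (by omega)
  obtain ⟨y, hy, hyx, hvy, hvn⟩ := other2 hv2 hx hvx
  have hx2 := h22 v hv hv2 x hx hvx
  have hy2 := h22 v hv hv2 y hy hvy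
  obtain ⟨x', hx', hx'v, hxx', hxn⟩ := other2 hx2 hv hvx.symm
  obtain ⟨y', hy', hy'v, hyy', hyn⟩ := other2 hy2 hv hvy.symm
  have n1 := hvx.ne
  have n2 := hvy.ne
  have n3 := hxx'.ne
  have n4 := hyy'.ne
  by_cases hxy : G.Adj x y
  · left
    have hx'y : y = x' := by
      rcases hxn y hy hxy with h | h
      · exact absurd h n2.symm
      · exact h
    have hy'x : x = y' := by
      rcases hyn x hx hxy.symm with h | h
      · exact absurd h n1.symm
      · exact h
    have hR : ({v, x, y} : Finset V) ⊆ W := by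
      intro x; simp; rintro (rfl | rfl | rfl) <;> assumption
    refine red_of2 hmin hb {v, x, y} {v} hR (by simp) ?_ (fun r => 30) ?_ ?_
    · intro r hr
      left
      simp at hr
      rcases hr with rfl | rfl | rfl
      · exact cov_self (by simp)
      · exact cov_adj (v := v) (by simp) hvx
      · exact cov_adj (v := v) (by simp) hvy
    · have z1 : dg G (W \ {v, x, y}) v = 0 :=
        dg_zero (fun w hw ha => by rcases hvn w hw ha with rfl | rfl <;> simp)
      have z2 : dg G (W \ {v, x, y}) x = 0 :=
        dg_zero (fun w hw ha => by
          rcases hxn w hw ha with h | h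
          · simp [h]
          · simp [h, hx'y])
      have z3 : dg G (W \ {v, x, y}) y = 0 :=
        dg_zero (fun w hw ha => by
          rcases hyn w hw ha with h | h
          · simp [h]
          · simp [h, hy'x])
      intro r hr
      simp only [Finset.mem_insert, Finset.mem_singleton] at hr
      rcases hr with h | h | h
      · rw [h, z1, hv2]; simp [bb]
      · rw [h, z2, hx2]; simp [bb]
      · rw [h, z3, hy2]; simp [bb]
    · rw [Finset.sum_const, Finset.card_insert_of_notMem (by simp [n1, n2]),
        Finset.card_pair hyx.symm]
      simp
  have hx'y : x' ≠ y := by rintro rfl; exact hxy hxx'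
  have hy'x : y' ≠ x := by rintro rfl; exact hxy hyy'.symm
  by_cases hsame : x' = y'
  · left
    subst hsame
    have hx'2 := h22 x hx hx2 x' hx' hxx'
    have hx'n : ∀ w ∈ W, G.Adj x' w → w = x ∨ w = y := by
      obtain ⟨t, ht, htx, hx't, hn⟩ := other2 hx'2 hx hxx'.symm
      intro w hw ha
      have : y = t := by
        rcases hn y hy hyy'.symm with h | h
        · exact absurd h hyx
        · exact h
      rw [this]; exact hn w hw ha
    have hR : ({v, x, y, x'} : Finset V) ⊆ W := by
      intro x; simp; rintro (rfl | rfl | rfl | rfl) <;> assumption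
    refine red_of0 hmin {v, x, y, x'} {v} hR (by simp) ?_ (fun r => 26) ?_ ?_
    · intro r hr
      simp at hr
      have cx : Cov G {v} x := cov_adj (v := v) (by simp) hvx
      have cy : Cov G {v} y := cov_adj (v := v) (by simp) hvy
      rcases hr with h | h | h | h
      · left; exact cov_self (by simp [h])
      · left; rw [h]; exact cx
      · left; rw [h]; exact cy
      · right; intro w hw ha
        rw [h] at ha
        rcases hx'n w hw ha with h | h
        · rw [h]; exact cx
        · rw [h]; exact cy
    · intro r hr
      have : dg G (W \ {v, x, y, x'}) r = 0 := by
        apply dg_zero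
        intro w hw ha
        simp only [Finset.mem_insert, Finset.mem_singleton] at hr ⊢
        rcases hr with h | h | h | h
        · rw [h] at ha; have := hvn w hw ha; tauto
        · rw [h] at ha; have := hxn w hw ha; tauto
        · rw [h] at ha; have := hyn w hw ha; tauto
        · rw [h] at ha; have := hx'n w hw ha; tauto
      rw [this]; simp [bb]
    · rw [Finset.sum_const, Finset.card_insert_of_notMem (by simp [n1, n2, hx'v.symm]),
        Finset.card_insert_of_notMem (by simp [n3, hyx.symm]),
        Finset.card_pair hx'y.symm]
      simp
  have hx'2 := h22 x hx hx2 x' hx' hxx'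
  have hy'2 := h22 y hy hy2 y' hy' hyy'
  obtain ⟨u, hu, huy, hy'u, hy'n⟩ := other2 hy'2 hy hyy'.symm
  by_cases hC : u = x'
  · right
    subst hC
    obtain ⟨t, ht, htx, hx't, hx'n⟩ := other2 hx'2 hx hxx'.symm
    have e : y' = t := by
      rcases hx'n y' hy' hy'u.symm with h | h
      · exact absurd h hy'x
      · exact h
    rw [← e] at hx'n
    refine ⟨x, u, y', y, hv, hx, hx', hy', hy, hvx, hxx', hy'u.symm, hyy'.symm, hvy.symm,
      hx'v.symm, hy'x.symm, hx'y, hy'v, hyx, hvn, ?_, ?_, ?_, hyn⟩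
    · intro w hw ha; exact (hxn w hw ha).symm
    · intro w hw ha; exact (hx'n w hw ha).symm
    · intro w hw ha; exact hy'n w hw ha
  · left
    have hu2 := h22 y' hy' hy'2 u hu hy'u
    obtain ⟨t, ht, hty', hut, hun⟩ := other2 hu2 hy' hy'u.symm
    have m1 := hy'u.ne
    have m2 := hut.ne
    have uv : u ≠ v := by
      rintro rfl
      rcases hvn y' hy' hy'u.symm with h | h
      · exact hy'x h
      · exact n4 h.symm
    have ux : u ≠ x := by
      rintro rfl
      rcases hxn y' hy' hy'u.symm with h | h
      · exact hy'v h
      · exact hsame h.symm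
    have tv : t ≠ v := by
      rintro rfl
      rcases hvn u hu hut.symm with h | h
      · exact ux h
      · exact huy h
    have tx : t ≠ x := by
      rintro rfl
      rcases hxn u hu hut.symm with h | h
      · exact uv h
      · exact hC h
    have ty : t ≠ y := by
      rintro rfl
      rcases hyn u hu hut.symm with h | h
      · exact uv h
      · exact m1 h.symm
    have hR : ({v, y, y', u, x, t} : Finset V) ⊆ W := by
      intro x; simp; rintro (rfl | rfl | rfl | rfl | rfl | rfl) <;> assumption
    refine red_of2 hmin hb {v, y, y', u, x, t} {v, u} hR (by simp) ?_
      (fun r => if r = x ∨ r = t then 25 else 30) ?_ ?_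
    · intro r hr
      left
      simp at hr
      rcases hr with h | h | h | h | h | h
      · exact cov_self (by simp [h])
      · rw [h]; exact cov_adj (v := v) (by simp) hvy
      · rw [h]; exact cov_adj (v := u) (by simp) hy'u.symm
      · exact cov_self (by simp [h])
      · rw [h]; exact cov_adj (v := v) (by simp) hvx
      · rw [h]; exact cov_adj (v := u) (by simp) hut
    · intro r hr
      have hr2 : dg G W r ≤ 2 := by rcases hw r (hR hr) with h | h <;> omega
      by_cases hrr : r = x ∨ r = t
      · have : dg G (W \ {v, y, y', u, x, t}) r + 1 ≤ dg G W r := by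
          rcases hrr with h | h
          · rw [h]; exact dg_lt hR (x := v) (by simp) hvx.symm
          · rw [h]; exact dg_lt hR (x := u) (by simp) hut.symm
        have := bb_le5 (i := dg G (W \ {v, y, y', u, x, t}) r) (by omega)
        simp only [hrr, if_true]
        omega
      · have : dg G (W \ {v, y, y', u, x, t}) r = 0 := by
          apply dg_zero
          intro w hw ha
          simp only [Finset.mem_insert, Finset.mem_singleton] at hr ⊢
          rcases hr with h | h | h | h | h | h
          · rw [h] at ha; have := hvn w hw ha; tauto
          · rw [h] at ha; have := hyn w hw ha; tauto
          · rw [h] at ha; have := hy'n w hw ha; tauto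
          · rw [h] at ha; have := hun w hw ha; tauto
          · tauto
          · tauto
        rw [this]
        simp only [hrr, if_false, bb]
        omega
    · rw [Finset.sum_insert (by simp [n1, n2, hy'v.symm, uv.symm, tv.symm]),
        Finset.sum_insert (by simp [n4, huy.symm, hyx, ty.symm]),
        Finset.sum_insert (by simp [m1, hy'x, hty'.symm]),
        Finset.sum_insert (by simp [ux, m2]),
        Finset.sum_insert (by simp [tx.symm]), Finset.sum_singleton,
        Finset.card_pair uv.symm]
      simp [n1, n2, hy'v.symm, uv.symm, tv.symm, n4, huy.symm, hyx, ty.symm, m1, hy'x, hty'.symm,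
        ux, m2]

lemma dg_le_card (R : Finset V) (v : V) : dg G R v ≤ R.card := Finset.card_filter_le _ _

lemma rate_private {c : ℤ} {m : ℕ} (hR : R ⊆ W) {v : V}
    (hp : ∀ x ∈ R, G.Adj v x → ∀ z ∈ W, G.Adj v z → z ∈ R) (hm : dg G R v ≤ m)
    (hbb : ∀ i ≤ m, bb i ≥ c * i) :
    bb (dg G W v) - bb (dg G (W \ R) v) ≥ c * dg G R v := by
  have hs := dg_split (G := G) hR v
  by_cases h : ∃ x ∈ R, G.Adj v x
  · obtain ⟨x, hx, ha⟩ := h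
    have h0 := dg_zero (hp x hx ha)
    rw [h0] at hs ⊢
    have := hbb _ hm
    rw [← hs, zero_add]
    simpa [bb] using this
  · push Not at h
    have h0 := dg_eq_zero h
    rw [h0] at hs ⊢
    rw [← hs]; simp

lemma phase_c5 (hmin : ∀ v : V, 4 ≤ (G.neighborSet v).ncard)
    (hb : ∀ v, v ∉ W → dg G W v ≤ 3) (hw : ∀ v ∈ W, dg G W v = 1 ∨ dg G W v = 2)
    {a b c d e : V} (h : C5 G W a b c d e) : Red G W := by
  have hb4 : ∀ v, v ∉ W → dg G W v ≤ 4 := fun v hv => (hb v hv).trans (by norm_num)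
  have hw2 : ∀ v ∈ W, dg G W v ≤ 2 := fun v hv => by rcases hw v hv with h | h <;> omega
  by_cases hA : ∃ a b c d e, C5 G W a b c d e ∧ ∃ u, u ∉ W ∧ G.Adj u a ∧
      ∃ z ∈ W, G.Adj u z ∧ z ∉ ({a, b, c, d, e} : Finset V)
  · clear h a b c d e
    obtain ⟨a, b, c, d, e, h, u, hu, hua, z, hz, huz, hzC⟩ := hA
    have hR : insert z ({a, b, c, d, e} : Finset V) ⊆ W := by
      have := h.ma
      have := h.mb
      have := h.mc
      have := h.md
      have := h.me
      intro x; simp; rintro (rfl | rfl | rfl | rfl | rfl | rfl) <;> assumption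
    have huc : u ≠ c := by rintro rfl; exact hu h.mc
    have ca : Cov G {u, c} a := cov_adj (v := u) (by simp) hua
    have cd : Cov G {u, c} d := cov_adj (v := c) (by simp) h.cd
    refine red_of2 hmin hb4 (insert z {a, b, c, d, e}) {u, c} hR (by simp) ?_
      (fun r => if r = z then 20 else 30) ?_ ?_
    · intro r hr
      simp only [Finset.mem_insert, Finset.mem_singleton] at hr
      rcases hr with rfl | rfl | rfl | rfl | rfl | rfl
      · left; exact cov_adj (v := u) (by simp) huz
      · left; exact ca
      · left; exact cov_adj (v := c) (by simp) h.bc.symm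
      · left; exact cov_self (by simp)
      · left; exact cd
      · right; intro w hw ha
        rcases h.ne w hw ha with rfl | rfl
        · exact ca
        · exact cd
    · intro r hr
      have hr2 := hw2 r (hR hr)
      by_cases hrz : r = z
      · simp only [hrz, if_true]
        rw [hrz] at hr2
        have h1 := bb_mono (dg_le (G := G) hR z)
        have h2 := bb_mono hr2
        have h3 : bb 2 = 10 := rfl
        omega
      · have : dg G (W \ insert z {a, b, c, d, e}) r = 0 := by
          apply dg_zero
          intro w hw ha
          simp only [Finset.mem_insert, Finset.mem_singleton] at hr ⊢
          rcases hr with h' | h' | h' | h' | h' | h'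
          · exact absurd h' hrz
          · rw [h'] at ha; have := h.na w hw ha; tauto
          · rw [h'] at ha; have := h.nb w hw ha; tauto
          · rw [h'] at ha; have := h.nc w hw ha; tauto
          · rw [h'] at ha; have := h.nd w hw ha; tauto
          · rw [h'] at ha; have := h.ne w hw ha; tauto
        rw [this]
        simp only [hrz, if_false, bb]
        omega
    · rw [Finset.sum_insert hzC, Finset.card_pair huc,
        Finset.sum_congr rfl (g := fun _ => (30 : ℤ))]
      · rw [Finset.sum_const, 
          Finset.card_insert_of_notMem (by simp [h.ab.ne, h.ac, h.da.symm, h.ea.ne']),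
          Finset.card_insert_of_notMem (by simp [h.bc.ne, h.bd, h.eb.symm]),
          Finset.card_insert_of_notMem (by simp [h.cd.ne, h.ce]),
          Finset.card_pair h.de.ne]
        simp
      · intro r hr
        have : r ≠ z := by rintro rfl; exact hzC hr
        simp [this]
  · push Not at hA
    have hR : ({a, b, c, d, e} : Finset V) ⊆ W := by
      have := h.ma
      have := h.mb
      have := h.mc
      have := h.md
      have := h.me
      intro x; simp; rintro (rfl | rfl | rfl | rfl | rfl) <;> assumption
    refine red_of hmin {a, b, c, d, e} {a, c} hR (by simp) ?_ 4 (by norm_num)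
      (fun r => 34) ?_ ?_ ?_
    · intro r hr
      left
      simp only [Finset.mem_insert, Finset.mem_singleton] at hr
      rcases hr with rfl | rfl | rfl | rfl | rfl
      · exact cov_self (by simp)
      · exact cov_adj (v := c) (by simp) h.bc.symm
      · exact cov_self (by simp)
      · exact cov_adj (v := c) (by simp) h.cd
      · exact cov_adj (v := a) (by simp) h.ea.symm
    · intro v hv
      have hs := dg_split (G := G) hR v
      have hv3 := hb v hv
      refine rate_private hR (m := 3) ?_ (by omega) (fun i hi => bb_ge4 hi)
      intro x hx hvx z hz hvz
      simp only [Finset.mem_insert, Finset.mem_singleton] at hx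
      have r1 := h.rot
      have r2 := r1.rot
      have r3 := r2.rot
      have r4 := r3.rot
      rcases hx with rfl | rfl | rfl | rfl | rfl
      · exact hA _ _ _ _ _ h v hv hvx z hz hvz
      · have := hA _ _ _ _ _ r1 v hv hvx z hz hvz
        simp only [Finset.mem_insert, Finset.mem_singleton] at this ⊢; tauto
      · have := hA _ _ _ _ _ r2 v hv hvx z hz hvz
        simp only [Finset.mem_insert, Finset.mem_singleton] at this ⊢; tauto
      · have := hA _ _ _ _ _ r3 v hv hvx z hz hvz
        simp only [Finset.mem_insert, Finset.mem_singleton] at this ⊢; tauto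
      · have := hA _ _ _ _ _ r4 v hv hvx z hz hvz
        simp only [Finset.mem_insert, Finset.mem_singleton] at this ⊢; tauto
    · intro r hr
      have hr2 := hw2 r (hR hr)
      have : dg G (W \ {a, b, c, d, e}) r = 0 := by
        apply dg_zero
        intro w hw ha
        simp only [Finset.mem_insert, Finset.mem_singleton] at hr ⊢
        rcases hr with h' | h' | h' | h' | h'
        · rw [h'] at ha; have := h.na w hw ha; tauto
        · rw [h'] at ha; have := h.nb w hw ha; tauto
        · rw [h'] at ha; have := h.nc w hw ha; tauto
        · rw [h'] at ha; have := h.nd w hw ha; tauto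
        · rw [h'] at ha; have := h.ne w hw ha; tauto
      rw [this]
      simp only [bb]
      omega
    · rw [Finset.sum_const, Finset.card_pair h.ac,
          Finset.card_insert_of_notMem (by simp [h.ab.ne, h.ac, h.da.symm, h.ea.ne']),
          Finset.card_insert_of_notMem (by simp [h.bc.ne, h.bd, h.eb.symm]),
          Finset.card_insert_of_notMem (by simp [h.cd.ne, h.ce]),
          Finset.card_pair h.de.ne]
      simp

lemma phase_k2 (hmin : ∀ v : V, 4 ≤ (G.neighborSet v).ncard)
    (hb : ∀ v, v ∉ W → dg G W v ≤ 3) (hw : ∀ v ∈ W, dg G W v = 1)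
    (p : V) (hp : p ∈ W) : Red G W := by
  have hb4 : ∀ v, v ∉ W → dg G W v ≤ 4 := fun v hv => (hb v hv).trans (by norm_num)
  by_cases hA : ∃ p ∈ W, ∃ q ∈ W, G.Adj p q ∧ ∃ u, u ∉ W ∧ G.Adj u p ∧
      ∃ z ∈ W, G.Adj u z ∧ z ∉ ({p, q} : Finset V)
  · clear hp p
    obtain ⟨p, hp, q, hq, hpq, u, hu, hup, z, hz, huz, hzC⟩ := hA
    have hR : ({z, p, q} : Finset V) ⊆ W := by
      intro x; simp; rintro (rfl | rfl | rfl) <;> assumption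
    have hpn := uniq1 (hw p hp) hq hpq
    have hqn := uniq1 (hw q hq) hp hpq.symm
    refine red_of2 hmin hb4 {z, p, q} {u} hR (by simp) ?_ (fun r => if r = p then 32 else 27) ?_ ?_
    · intro r hr
      simp only [Finset.mem_insert, Finset.mem_singleton] at hr
      rcases hr with rfl | rfl | rfl
      · left; exact cov_adj (v := u) (by simp) huz
      · left; exact cov_adj (v := u) (by simp) hup
      · right; intro w hw ha
        rw [hqn w hw ha]; exact cov_adj (v := u) (by simp) hup
    · intro r hr
      have h1 := hw r (hR hr)
      have h2 := dg_le (G := G) hR r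
      by_cases hrp : r = p
      · have h0 : dg G (W \ {z, p, q}) r = 0 :=
          dg_zero (fun w hw ha => by rw [hrp] at ha; rw [hpn w hw ha]; simp)
        rw [h0, h1]; simp [hrp, bb]
      · have := bb_le5 (i := dg G (W \ {z, p, q}) r) (by omega)
        simp only [hrp, if_false]
        omega
    · have hzp : z ≠ p := by rintro rfl; simp at hzC
      rw [Finset.sum_insert hzC, Finset.sum_pair hpq.ne]
      simp [hzp, hpq.ne']
  · push Not at hA
    obtain ⟨q, hq, hpq⟩ := exists_nbr (G := G) (W := W) (x := p) (by rw [hw p hp])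
    have hR : ({p, q} : Finset V) ⊆ W := by
      intro x; simp; rintro (rfl | rfl) <;> assumption
    have hpn := uniq1 (hw p hp) hq hpq
    have hqn := uniq1 (hw q hq) hp hpq.symm
    refine red_of hmin {p, q} {p} hR (by simp) ?_ 5 (by norm_num)
      (fun r => 41) ?_ ?_ ?_
    · intro r hr
      left
      simp only [Finset.mem_insert, Finset.mem_singleton] at hr
      rcases hr with rfl | rfl
      · exact cov_self (by simp)
      · exact cov_adj (v := p) (by simp) hpq
    · intro v hv
      have hc := dg_le_card (G := G) {p, q} v
      rw [Finset.card_pair hpq.ne] at hc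
      refine rate_private hR (m := 2) ?_ hc (fun i hi => bb_ge5 hi)
      intro x hx hvx z hz hvz
      simp only [Finset.mem_insert, Finset.mem_singleton] at hx
      rcases hx with rfl | rfl
      · exact hA _ hp _ hq hpq v hv hvx z hz hvz
      · have := hA _ hq _ hp hpq.symm v hv hvx z hz hvz
        simp only [Finset.mem_insert, Finset.mem_singleton] at this ⊢; tauto
    · intro r hr
      have hr2 := hw r (hR hr)
      have : dg G (W \ {p, q}) r = 0 := by
        apply dg_zero
        intro w hw ha
        simp only [Finset.mem_insert, Finset.mem_singleton] at hr ⊢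
        rcases hr with h' | h'
        · rw [h'] at ha; have := hpn w hw ha; tauto
        · rw [h'] at ha; have := hqn w hw ha; tauto
      rw [this, hr2]
      simp [bb]
    · rw [Finset.sum_const, Finset.card_pair hpq.ne]
      simp

lemma main_red (hmin : ∀ v : V, 4 ≤ (G.neighborSet v).ncard) (hW : W.Nonempty) : Red G W := by
  by_cases hiso : ∃ v ∈ W, dg G W v = 0
  · obtain ⟨v, hv, h0⟩ := hiso
    refine red_of0 hmin {v} ∅ (by simpa using hv) (by simp) ?_ (fun _ => 0) ?_ (by simp)
    · intro r hr
      right; intro w hw ha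
      rw [Finset.mem_singleton] at hr
      rw [hr] at ha
      have := dg_pos (G := G) hw ha
      omega
    · intro r hr
      have := bb_le (dg G (W \ {v}) r)
      linarith
  push Not at hiso
  obtain ⟨v, hv, hmax⟩ := Finset.exists_max_image W (dg G W) hW
  have hl0 : ∀ v, v ∉ W → ∀ R ⊆ W,
      bb (dg G W v) - bb (dg G (W \ R) v) ≥ 0 * dg G R v := by
    intro v _ R hR
    have := bb_mono (dg_le (G := G) hR v)
    linarith
  have b1 : bb 1 = 5 := rfl
  have b2 : bb 2 = 10 := rfl
  have b3 : bb 3 = 12 := rfl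
  by_cases h5 : 5 ≤ dg G W v
  · refine red_white hmin v hv 0 12 le_rfl hl0 ?_ ?_
    · intro r _ _
      have := bb_le (dg G W r - 1)
      linarith
    · omega
  by_cases h4 : dg G W v = 4
  · refine red_white hmin v hv 0 14 le_rfl hl0 ?_ ?_
    · intro r hr _
      have := hmax r hr
      have := bb_mono (show dg G W r - 1 ≤ 3 by omega)
      linarith
    · omega
  have hW3 : ∀ r ∈ W, dg G W r ≤ 3 := fun r hr => by have := hmax r hr; omega
  by_cases hb5 : ∃ u, u ∉ W ∧ 5 ≤ dg G W u
  · obtain ⟨u, hu, hu5⟩ := hb5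
    refine red_blue hmin u hu (by omega) 0 14 14 le_rfl hl0 ?_ ?_ ?_
    · rw [bb_big (by omega)]; simp
    · intro r hr
      have := bb_mono (hW3 r hr)
      linarith
    · omega
  push Not at hb5
  have hb4 : ∀ v, v ∉ W → dg G W v ≤ 4 := fun v hv => by have := hb5 v hv; omega
  have hl2 : ∀ v, v ∉ W → ∀ R ⊆ W,
      bb (dg G W v) - bb (dg G (W \ R) v) ≥ 2 * dg G R v := by
    intro v hv R hR
    exact bb_rate2 (hb4 v hv) (dg_split hR v)
  by_cases h3 : dg G W v = 3
  · refine red_white hmin v hv 2 18 (by norm_num) hl2 ?_ ?_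
    · intro r hr _
      have := hW3 r hr
      have := bb_mono (show dg G W r - 1 ≤ 2 by omega)
      omega
    · omega
  have hW2 : ∀ r ∈ W, dg G W r ≤ 2 := fun r hr => by have := hmax r hr; omega
  by_cases hbl4 : ∃ u, u ∉ W ∧ dg G W u = 4
  · obtain ⟨u, hu, hu4⟩ := hbl4
    refine red_blue hmin u hu (by omega) 2 6 20 (by norm_num) hl2 ?_ ?_ ?_
    · rw [bb_big (by omega), hu4]; norm_num
    · intro r hr
      have := hW2 r hr
      have := bb_mono (hW2 r hr)
      omega
    · omega
  push Not at hbl4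
  have hb3 : ∀ v, v ∉ W → dg G W v ≤ 3 := fun v hv => by
    have := hb4 v hv
    have := hbl4 v hv
    omega
  have hw : ∀ v ∈ W, dg G W v = 1 ∨ dg G W v = 2 := fun v hv => by
    have := hW2 v hv
    have := hiso v hv
    omega
  rcases hw v hv with h1 | h2
  · refine phase_k2 hmin hb3 ?_ v hv
    intro r hr
    have := hmax r hr
    rcases hw r hr with h | h <;> omega
  · rcases phase_cycle hmin hb4 hw v hv h2 with h | ⟨b, c, d, e, h⟩
    · exact h
    · exact phase_c5 hmin hb3 hw h

lemma main_ind (hmin : ∀ v : V, 4 ≤ (G.neighborSet v).ncard) (W : Finset V) :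
    ∃ S : Finset V, (∀ u ∈ W, ∀ v ∈ W, G.Adj u v → Cov G S u ∨ Cov G S v) ∧
      82 * (S.card : ℤ) ≤ pot G W := by
  induction W using Finset.strongInduction with
  | H W ih =>
    rcases W.eq_empty_or_nonempty with rfl | hW
    · refine ⟨∅, by simp, ?_⟩
      simp only [Finset.card_empty]
      unfold pot
      apply Finset.sum_nonneg
      intro v _
      simp [wt, bb_nonneg]
    · obtain ⟨R, T, hR, hne, hcov, hp⟩ := main_red hmin hW
      obtain ⟨S, hS, hc⟩ := ih (W \ R) (Finset.sdiff_ssubset hR hne)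
      have c1 : ∀ u, Cov G T u → Cov G (S ∪ T) u := by
        rintro u (h | ⟨s, hs, h⟩)
        · exact cov_self (Finset.mem_union_right _ h)
        · exact cov_adj (Finset.mem_union_right _ hs) h
      have c2 : ∀ u, Cov G S u → Cov G (S ∪ T) u := by
        rintro u (h | ⟨s, hs, h⟩)
        · exact cov_self (Finset.mem_union_left _ h)
        · exact cov_adj (Finset.mem_union_left _ hs) h
      refine ⟨S ∪ T, ?_, ?_⟩
      · intro u hu v hv ha
        by_cases huR : u ∈ R
        · rcases hcov u huR with h | h
          · exact Or.inl (c1 _ h)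
          · exact Or.inr (c1 _ (h v hv ha))
        by_cases hvR : v ∈ R
        · rcases hcov v hvR with h | h
          · exact Or.inr (c1 _ h)
          · exact Or.inl (c1 _ (h u hu ha.symm))
        rcases hS u (by simp [hu, huR]) v (by simp [hv, hvR]) ha with h | h
        · exact Or.inl (c2 _ h)
        · exact Or.inr (c2 _ h)
      · have := Finset.card_union_le S T
        omega

end Iso

/-- If `G` has order `n` and minimum degree at least 4, then `ι(G) ≤ 13n/41`. -/
theorem isolation_number_minDegree_four {V : Type*} [Fintype V] (G : SimpleGraph V) (n : ℕ)
    (hn : Fintype.card V = n) (hmin : ∀ v : V, 4 ≤ (G.neighborSet v).ncard) :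
    (isolationNumber G : ℝ) ≤ 13 * n / 41 := by
  obtain ⟨S, hS, hc⟩ := Iso.main_ind hmin Finset.univ
  have hp : Iso.pot G Finset.univ = 26 * n := by
    simp [Iso.pot, Iso.wt, hn, mul_comm]
  have h1 : isolationNumber G ≤ S.card := by
    apply Nat.sInf_le
    refine ⟨(S : Set V), ?_, Set.ncard_coe_finset S⟩
    intro u v ha
    have key : ∀ x, Iso.Cov G S x → x ∈ closedNbhd G (S : Set V) := by
      intro x hx
      simpa [closedNbhd, Iso.Cov] using hx
    rcases hS u (Finset.mem_univ _) v (Finset.mem_univ _) ha with h | h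
    · exact Or.inl (key _ h)
    · exact Or.inr (key _ h)
  rw [hp] at hc
  have h2 : 41 * isolationNumber G ≤ 13 * n := by omega
  have h3 : (41 : ℝ) * isolationNumber G ≤ 13 * n := by exact_mod_cast h2
  linarith
end

section
/- If G is a graph of order n with minimum degree at least 5, then ι(G) ≤ 23n/78. -/
open Classical

namespace IsoFive

open Finset

/-- weights of dominated vertices -/
def bw : ℕ → ℤ
  | 0 => 0
  | 1 => 4
  | 2 => 8
  | 3 => 10
  | 4 => 12
  | _ => 13

lemma bw_ge5 {n : ℕ} (h : 5 ≤ n) : bw n = 13 := by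
  obtain ⟨k, rfl⟩ := Nat.exists_eq_add_of_le h
  rw [Nat.add_comm]; rfl

lemma bw_le (n : ℕ) : bw n ≤ 13 := by
  rcases Nat.lt_or_ge n 5 with h | h
  · interval_cases n <;> decide
  · rw [bw_ge5 h]

lemma bw_mono : Monotone bw := by
  apply monotone_nat_of_le_succ
  intro n
  rcases Nat.lt_or_ge n 5 with h | h
  · interval_cases n <;> decide
  · rw [bw_ge5 h, bw_ge5 (by omega)]

lemma bw_nonneg (n : ℕ) : 0 ≤ bw n := bw_mono (Nat.zero_le n)

variable {V : Type*} [Fintype V] (G : SimpleGraph V)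

/-- white degree -/
noncomputable def wd (W : Finset V) (v : V) : ℕ := (W.filter (fun w => G.Adj v w)).card

/-- vertex weight -/
noncomputable def ph (W : Finset V) (v : V) : ℤ := if v ∈ W then 23 else bw (wd G W v)

/-- total weight -/
noncomputable def Phi (W : Finset V) : ℤ := ∑ v, ph G W v

lemma wd_mono {W' W : Finset V} (h : W' ⊆ W) (v : V) : wd G W' v ≤ wd G W v :=
  card_le_card (filter_subset_filter _ h)

lemma wd_add {W' W T : Finset V} (h : W' ⊆ W) (hT : T ⊆ W) (hd : Disjoint T W') (v : V) :
    wd G W' v + wd G T v ≤ wd G W v := by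
  unfold wd
  rw [← card_union_of_disjoint]
  · apply card_le_card
    rw [← filter_union]
    exact filter_subset_filter _ (union_subset h hT)
  · exact disjoint_filter_filter hd.symm

lemma gain {W W' T X Y : Finset V} (hW : W' ⊆ W) (hT : T ⊆ W) (hd : Disjoint T W')
    (hX : Disjoint X W) (hY : Disjoint Y W) (hXY : Disjoint X Y) (δ : ℤ) (hδ0 : 0 ≤ δ)
    (hδ : ∀ x ∈ X, ∀ j k, j + k ≤ wd G W x → bw j + δ * k ≤ bw (wd G W x)) :
    Phi G W' + ∑ u ∈ T, (23 - bw (wd G W' u) + δ * wd G X u)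
      + ∑ y ∈ Y, (bw (wd G W y) - bw (wd G W' y)) ≤ Phi G W := by
  have hcount : ∑ u ∈ T, (wd G X u : ℤ) = ∑ x ∈ X, (wd G T x : ℤ) := by
    have := sum_card_bipartiteAbove_eq_sum_card_bipartiteBelow (s := T) (t := X) (fun a b => G.Adj a b)
    unfold bipartiteAbove bipartiteBelow at this
    unfold wd
    simp_rw [G.adj_comm] at this ⊢
    exact_mod_cast this
  rw [sum_add_distrib, ← mul_sum, hcount, mul_sum]
  have e1 : ∑ u ∈ T, (23 - bw (wd G W' u)) = ∑ x, if x ∈ T then 23 - bw (wd G W' x) else 0 := by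
    simp [sum_ite_mem]
  have e2 : ∑ x ∈ X, δ * (wd G T x : ℤ) = ∑ x, if x ∈ X then δ * (wd G T x : ℤ) else 0 := by
    simp [sum_ite_mem]
  have e3 : ∑ y ∈ Y, (bw (wd G W y) - bw (wd G W' y))
      = ∑ x, if x ∈ Y then (bw (wd G W x) - bw (wd G W' x)) else 0 := by
    simp [sum_ite_mem]
  rw [e1, e2, e3]
  unfold Phi
  rw [← sum_add_distrib, ← sum_add_distrib, ← sum_add_distrib]
  apply sum_le_sum
  intro x _
  have hb := bw_le (wd G W' x)
  have hm := bw_mono (wd_mono G hW x)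
  by_cases h1 : x ∈ W
  · have hxX : x ∉ X := fun h => (disjoint_left.1 hX) h h1
    have hxY : x ∉ Y := fun h => (disjoint_left.1 hY) h h1
    by_cases h2 : x ∈ W'
    · have hxT : x ∉ T := fun h => (disjoint_left.1 hd) h h2
      simp [ph, h1, h2, hxX, hxY, hxT]
    · by_cases h3 : x ∈ T
      · simp [ph, h1, h2, hxX, hxY, h3]
      · simp [ph, h1, h2, hxX, hxY, h3]; linarith
  · have h2 : x ∉ W' := fun h => h1 (hW h)
    have h3 : x ∉ T := fun h => h1 (hT h)
    by_cases hx : x ∈ X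
    · have hxY : x ∉ Y := fun h => (disjoint_left.1 hXY) hx h
      have := hδ x hx _ _ (wd_add G hW hT hd x)
      simp [ph, h1, h2, hx, hxY, h3]; linarith
    · by_cases hxY : x ∈ Y
      · simp [ph, h1, h2, hx, hxY, h3]
      · simp [ph, h1, h2, hx, hxY, h3]; linarith

/-- the remaining white vertices after choosing `v` -/
noncomputable def nx (W : Finset V) (v : V) : Finset V :=
  W.filter (fun w => (w ≠ v ∧ ¬ G.Adj v w) ∧ ∃ z ∈ W, (z ≠ v ∧ ¬ G.Adj v z) ∧ G.Adj w z)

lemma nx_sub (W : Finset V) (v : V) : nx G W v ⊆ W := filter_subset _ _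

lemma wd_compl {W : Finset V} (hmin : ∀ v : V, 5 ≤ wd G univ v) (u : V) :
    5 ≤ wd G W u + wd G Wᶜ u := by
  have h := hmin u
  unfold wd at *
  rw [← card_union_of_disjoint, ← filter_union, union_compl]
  · exact h
  · exact disjoint_filter_filter disjoint_compl_right

lemma stepW (hmin : ∀ v : V, 5 ≤ wd G univ v) {W : Finset V} {v : V} (hv : v ∈ W)
    (δ : ℤ) (hδ0 : 0 ≤ δ)
    (hδ : ∀ x, x ∉ W → ∀ j k, j + k ≤ wd G W x → bw j + δ * k ≤ bw (wd G W x))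
    (c : ℤ) (hc : ∀ u ∈ W, G.Adj v u → 1 ≤ wd G W u →
      c ≤ 23 - bw (wd G W u - 1) + δ * (5 - wd G W u)) :
    Phi G (nx G W v) + 23 + δ * (5 - wd G W v) + wd G W v * c ≤ Phi G W := by
  set A := W.filter (fun w => G.Adj v w) with hA
  have hvA : v ∉ A := by simp [hA]
  have hsub : insert v A ⊆ W := by
    intro x hx
    rcases mem_insert.1 hx with rfl | hx
    · exact hv
    · exact (mem_filter.1 hx).1
  have hd : Disjoint (insert v A) (nx G W v) := by
    rw [disjoint_left]
    intro x hx hx'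
    simp only [nx, mem_filter] at hx'
    rcases mem_insert.1 hx with rfl | hx
    · exact hx'.2.1.1 rfl
    · exact hx'.2.1.2 (mem_filter.1 hx).2
  have g := gain G (W := W) (W' := nx G W v) (T := insert v A) (X := Wᶜ) (Y := ∅)
    (nx_sub G W v) hsub hd disjoint_compl_left (disjoint_empty_left _) (disjoint_empty_right _)
    δ hδ0 (fun x hx => hδ x (mem_compl.1 hx))
  rw [sum_insert hvA, sum_empty] at g
  have hdeg : ∀ u, δ * (5 - wd G W u) ≤ δ * wd G Wᶜ u := by
    intro u
    apply mul_le_mul_of_nonneg_left _ hδ0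
    have := wd_compl G (W := W) hmin u
    omega
  have h0 : wd G (nx G W v) v = 0 := by
    unfold wd
    rw [card_eq_zero, filter_eq_empty_iff]
    intro x hx
    simp only [nx, mem_filter] at hx
    exact hx.2.1.2
  have hsum : (A.card : ℤ) * c ≤
      ∑ u ∈ A, (23 - bw (wd G (nx G W v) u) + δ * wd G Wᶜ u) := by
    rw [← nsmul_eq_mul]
    apply card_nsmul_le_sum
    intro u hu
    obtain ⟨huW, huv⟩ := mem_filter.1 hu
    have h1 : wd G (nx G W v) u + wd G {v} u ≤ wd G W u := by
      apply wd_add G (nx_sub G W v) (by simpa using hv)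
      rw [disjoint_singleton_left]
      simp [nx]
    have h2 : wd G {v} u = 1 := by
      unfold wd
      rw [filter_singleton, if_pos huv.symm, card_singleton]
    have h3 := bw_mono (show wd G (nx G W v) u ≤ wd G W u - 1 by omega)
    have := hc u huW huv (by omega)
    have := hdeg u
    linarith
  have h4 := hdeg v
  rw [h0] at g
  have : bw 0 = 0 := rfl
  have h5 : wd G W v = A.card := rfl
  rw [h5] at h4 ⊢
  linarith

lemma stepB (hmin : ∀ v : V, 5 ≤ wd G univ v) {W : Finset V} {v : V} (hv : v ∉ W)
    (δ : ℤ) (hδ0 : 0 ≤ δ)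
    (hδ : ∀ x, x ∉ W → ∀ j k, j + k ≤ wd G W x → bw j + δ * k ≤ bw (wd G W x))
    (c : ℤ) (hc : ∀ u ∈ W, G.Adj v u →
      c ≤ 23 - bw (wd G (nx G W v) u) + δ * (4 - wd G W u)) :
    Phi G (nx G W v) + bw (wd G W v) + wd G W v * c ≤ Phi G W := by
  set A := W.filter (fun w => G.Adj v w) with hA
  have hsub : A ⊆ W := filter_subset _ _
  have hd : Disjoint A (nx G W v) := by
    rw [disjoint_left]
    intro x hx hx'
    simp only [nx, mem_filter] at hx'
    exact hx'.2.1.2 (mem_filter.1 hx).2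
  have g := gain G (W := W) (W' := nx G W v) (T := A) (X := Wᶜ.erase v) (Y := {v})
    (nx_sub G W v) hsub hd (disjoint_compl_left.mono_left (erase_subset _ _))
    (by simpa using hv) (by simp)
    δ hδ0 (fun x hx => hδ x (mem_compl.1 (mem_of_mem_erase hx)))
  rw [sum_singleton] at g
  have hdeg : ∀ u, δ * (4 - wd G W u) ≤ δ * wd G (Wᶜ.erase v) u := by
    intro u
    apply mul_le_mul_of_nonneg_left _ hδ0
    have := wd_compl G (W := W) hmin u
    have h2 : wd G Wᶜ u ≤ wd G (Wᶜ.erase v) u + 1 := by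
      unfold wd
      rw [filter_erase]
      have := pred_card_le_card_erase (s := Wᶜ.filter (fun w => G.Adj u w)) (a := v)
      omega
    omega
  have h0 : wd G (nx G W v) v = 0 := by
    unfold wd
    rw [card_eq_zero, filter_eq_empty_iff]
    intro x hx
    simp only [nx, mem_filter] at hx
    exact hx.2.1.2
  have hsum : (A.card : ℤ) * c ≤
      ∑ u ∈ A, (23 - bw (wd G (nx G W v) u) + δ * wd G (Wᶜ.erase v) u) := by
    rw [← nsmul_eq_mul]
    apply card_nsmul_le_sum
    intro u hu
    obtain ⟨huW, huv⟩ := mem_filter.1 hu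
    have := hc u huW huv
    have := hdeg u
    linarith
  rw [h0] at g
  have : bw 0 = 0 := rfl
  have h5 : wd G W v = A.card := rfl
  rw [h5] at g ⊢
  linarith

lemma delta (q : ℕ) (δ : ℤ) (W : Finset V) (hq : ∀ x, x ∉ W → wd G W x ≤ q)
    (h : ∀ m ≤ q, ∀ j ≤ m, ∀ k ≤ m, j + k ≤ m → bw j + δ * k ≤ bw m) :
    ∀ x, x ∉ W → ∀ j k, j + k ≤ wd G W x → bw j + δ * k ≤ bw (wd G W x) := by
  intro x hx j k hjk
  exact h _ (hq x hx) j (by omega) k (by omega) hjk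

lemma delta0 (W : Finset V) :
    ∀ x, x ∉ W → ∀ j k, j + k ≤ wd G W x → bw j + 0 * (k : ℤ) ≤ bw (wd G W x) := by
  intro x hx j k hjk
  have := bw_mono (show j ≤ wd G W x by omega)
  linarith

/-- if all white degrees are one, the neighbours of `v` lose all white neighbours -/
lemma nx_zero {W : Finset V} (hp : ∀ x ∈ W, wd G W x ≤ 1) {v u : V} (hu : u ∈ W)
    (hvu : G.Adj v u) : wd G (nx G W v) u = 0 := by
  unfold wd
  rw [card_eq_zero, filter_eq_empty_iff]
  intro x hx hux
  simp only [nx, mem_filter] at hx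
  obtain ⟨hxW, ⟨_, _⟩, z, hz, ⟨hzv, hvz⟩, hxz⟩ := hx
  have h1 := hp x hxW
  unfold wd at h1
  have := card_le_one.1 h1 z (by simp [hz, hxz]) u (by simp [hu, hux.symm])
  subst this
  exact hvz hvu

lemma exists_step (hmin : ∀ v : V, 5 ≤ wd G univ v) {W : Finset V} (hne : W.Nonempty)
    (hiso : ∀ w ∈ W, 1 ≤ wd G W w) : ∃ v, Phi G (nx G W v) + 78 ≤ Phi G W := by
  obtain ⟨v, hv, hvmax⟩ := exists_max_image W (wd G W) hne
  have hv1 := hiso v hv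
  have b0 : bw 0 = 0 := rfl
  have b1 : bw 1 = 4 := rfl
  have b2 : bw 2 = 8 := rfl
  have b3 : bw 3 = 10 := rfl
  have b4 : bw 4 = 12 := rfl
  have b5 : bw 5 = 13 := rfl
  -- first: large white degree
  by_cases h5 : 5 ≤ wd G W v
  · refine ⟨v, ?_⟩
    rcases Nat.lt_or_ge 5 (wd G W v) with h6 | h6
    · have := stepW G hmin hv 0 le_rfl (delta0 G W) 10 (by
        intro u _ _ _
        have := bw_le (wd G W u - 1)
        linarith)
      have : (6 : ℤ) ≤ wd G W v := by exact_mod_cast h6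
      linarith
    · have := stepW G hmin hv 0 le_rfl (delta0 G W) 11 (by
        intro u hu _ _
        have := bw_mono (show wd G W u - 1 ≤ 4 by have := hvmax u hu; omega)
        linarith)
      have : (5 : ℤ) ≤ wd G W v := by exact_mod_cast h5
      linarith
  have hp4 : ∀ x ∈ W, wd G W x ≤ 4 := fun x hx => by have := hvmax x hx; omega
  -- blue degree at least 6
  by_cases hq6 : ∃ x, x ∉ W ∧ 6 ≤ wd G W x
  · obtain ⟨x, hx, hx6⟩ := hq6
    refine ⟨x, ?_⟩
    have := stepB G hmin hx 0 le_rfl (delta0 G W) 11 (by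
      intro u hu _
      have := bw_mono ((wd_mono G (nx_sub G W x) u).trans (hp4 u hu))
      linarith)
    rw [bw_ge5 (by omega : 5 ≤ wd G W x)] at this
    have : (6 : ℤ) ≤ wd G W x := by exact_mod_cast hx6
    linarith
  have hq5 : ∀ x, x ∉ W → wd G W x ≤ 5 := fun x hx => by
    by_contra h; exact hq6 ⟨x, hx, by omega⟩
  have d5 := delta G 5 1 W hq5 (by decide)
  by_cases h4 : wd G W v = 4
  · refine ⟨v, ?_⟩
    have := stepW G hmin hv 1 (by norm_num) d5 14 (by
      intro u hu _ h1
      have h2 := hp4 u hu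
      generalize wd G W u = d at *
      interval_cases d <;> simp [b0, b1, b2, b3])
    rw [h4] at this
    push_cast at this
    linarith
  have hp3 : ∀ x ∈ W, wd G W x ≤ 3 := fun x hx => by have := hvmax x hx; omega
  by_cases hq : ∃ x, x ∉ W ∧ wd G W x = 5
  · obtain ⟨x, hx, hx5⟩ := hq
    refine ⟨x, ?_⟩
    have := stepB G hmin hx 1 (by norm_num) d5 14 (by
      intro u hu _
      have h1 := hiso u hu
      have h2 := hp3 u hu
      have h3 := bw_mono (wd_mono G (nx_sub G W x) u)
      generalize wd G W u = d at *
      interval_cases d <;> push_cast <;> linarith)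
    rw [hx5, b5] at this
    push_cast at this
    linarith
  have hq4 : ∀ x, x ∉ W → wd G W x ≤ 4 := fun x hx => by
    have h1 := hq5 x hx
    by_contra h; exact hq ⟨x, hx, by omega⟩
  have d4 := delta G 4 2 W hq4 (by decide)
  clear hq
  by_cases h3 : wd G W v = 3
  · refine ⟨v, ?_⟩
    have := stepW G hmin hv 2 (by norm_num) d4 19 (by
      intro u hu _ h1
      have h2 := hp3 u hu
      generalize wd G W u = d at *
      interval_cases d <;> simp [b0, b1, b2, b3])
    rw [h3] at this
    push_cast at this
    linarith
  have hp2 : ∀ x ∈ W, wd G W x ≤ 2 := fun x hx => by have := hvmax x hx; omega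
  by_cases hq : ∃ x, x ∉ W ∧ wd G W x = 4
  · obtain ⟨x, hx, hx5⟩ := hq
    refine ⟨x, ?_⟩
    have := stepB G hmin hx 2 (by norm_num) d4 19 (by
      intro u hu _
      have h1 := hiso u hu
      have h2 := hp2 u hu
      have h3 := bw_mono (wd_mono G (nx_sub G W x) u)
      generalize wd G W u = d at *
      interval_cases d <;> push_cast <;> linarith)
    rw [hx5, b4] at this
    push_cast at this
    linarith
  have hq3 : ∀ x, x ∉ W → wd G W x ≤ 3 := fun x hx => by
    have h1 := hq4 x hx
    by_contra h; exact hq ⟨x, hx, by omega⟩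
  have d3 := delta G 3 2 W hq3 (by decide)
  clear hq
  by_cases h2 : wd G W v = 2
  · refine ⟨v, ?_⟩
    have := stepW G hmin hv 2 (by norm_num) d3 25 (by
      intro u hu _ h1
      have h2 := hp2 u hu
      generalize wd G W u = d at *
      interval_cases d <;> simp [b0, b1, b2, b3])
    rw [h2] at this
    push_cast at this
    linarith
  have hp1 : ∀ x ∈ W, wd G W x ≤ 1 := fun x hx => by have := hvmax x hx; omega
  by_cases hq : ∃ x, x ∉ W ∧ wd G W x = 3
  · obtain ⟨x, hx, hx5⟩ := hq
    refine ⟨x, ?_⟩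
    have := stepB G hmin hx 2 (by norm_num) d3 29 (by
      intro u hu hxu
      have h1 := hiso u hu
      have h2 := hp1 u hu
      rw [nx_zero G hp1 hu hxu, show wd G W u = 1 by omega, b0]
      norm_num)
    rw [hx5, b3] at this
    push_cast at this
    linarith
  have hq2 : ∀ x, x ∉ W → wd G W x ≤ 2 := fun x hx => by
    have h1 := hq3 x hx
    by_contra h; exact hq ⟨x, hx, by omega⟩
  have d2 := delta G 2 4 W hq2 (by decide)
  clear hq
  by_cases hq : ∃ x, x ∉ W ∧ wd G W x = 2
  · obtain ⟨x, hx, hx5⟩ := hq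
    refine ⟨x, ?_⟩
    have := stepB G hmin hx 4 (by norm_num) d2 35 (by
      intro u hu hxu
      have h1 := hiso u hu
      have h2 := hp1 u hu
      rw [nx_zero G hp1 hu hxu, show wd G W u = 1 by omega, b0]
      norm_num)
    rw [hx5, b2] at this
    push_cast at this
    linarith
  refine ⟨v, ?_⟩
  have := stepW G hmin hv 4 (by norm_num) d2 39 (by
    intro u hu _ h1
    have h2 := hp1 u hu
    rw [show wd G W u = 1 by omega]
    simp [b0])
  rw [show wd G W v = 1 by omega] at this
  push_cast at this
  linarith

lemma nx_iso (W : Finset V) (v : V) : ∀ w ∈ nx G W v, 1 ≤ wd G (nx G W v) w := by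
  intro w hw
  have hw' := hw
  simp only [nx, mem_filter] at hw'
  obtain ⟨hwW, hw2, z, hz, hz2, hwz⟩ := hw'
  unfold wd
  rw [Nat.one_le_iff_ne_zero, ← Nat.pos_iff_ne_zero, card_pos]
  refine ⟨z, ?_⟩
  simp only [nx, mem_filter]
  exact ⟨⟨hz, hz2, w, hwW, hw2, hwz.symm⟩, hwz⟩

lemma main (hmin : ∀ v : V, 5 ≤ wd G univ v) (W : Finset V) :
    (∀ w ∈ W, 1 ≤ wd G W w) → ∃ S : Finset V, 78 * (S.card : ℤ) ≤ Phi G W ∧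
      ∀ u ∈ W, ∀ w ∈ W, G.Adj u w → u ∈ closedNbhd G (S : Set V) ∨ w ∈ closedNbhd G (S : Set V) := by
  induction W using Finset.strongInduction with
  | H W ih =>
    intro hiso
    rcases W.eq_empty_or_nonempty with rfl | hne
    · refine ⟨∅, ?_, by simp⟩
      simp only [card_empty, Nat.cast_zero, mul_zero, Phi]
      apply sum_nonneg
      intro x _
      simp [ph, bw_nonneg]
    · obtain ⟨v, hv⟩ := exists_step G hmin hne hiso
      have hss : nx G W v ⊂ W := by
        refine (nx_sub G W v).ssubset_of_ne ?_
        intro h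
        rw [h] at hv
        linarith
      obtain ⟨S, hS, hS2⟩ := ih _ hss (nx_iso G W v)
      refine ⟨insert v S, ?_, ?_⟩
      · have : ((insert v S).card : ℤ) ≤ S.card + 1 := by exact_mod_cast card_insert_le v S
        linarith
      · have hmono : closedNbhd G (S : Set V) ⊆ closedNbhd G ((insert v S : Finset V) : Set V) := by
          rintro x (hx | ⟨y, hy, hyx⟩)
          · left; simp at hx ⊢; exact Or.inr hx
          · right; refine ⟨y, ?_, hyx⟩; simp at hy ⊢; exact Or.inr hy
        have hin : ∀ x, ¬ (x ≠ v ∧ ¬ G.Adj v x) →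
            x ∈ closedNbhd G ((insert v S : Finset V) : Set V) := by
          intro x hx
          by_cases h : x = v
          · left; simp [h]
          · right
            refine ⟨v, by simp, ?_⟩
            by_contra h'
            exact hx ⟨h, h'⟩
        intro u hu w hw huw
        by_cases h1 : u ≠ v ∧ ¬ G.Adj v u
        · by_cases h2 : w ≠ v ∧ ¬ G.Adj v w
          · have m1 : u ∈ nx G W v := by
              simp only [nx, mem_filter]; exact ⟨hu, h1, w, hw, h2, huw⟩
            have m2 : w ∈ nx G W v := by
              simp only [nx, mem_filter]; exact ⟨hw, h2, u, hu, h1, huw.symm⟩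
            rcases hS2 u m1 w m2 huw with h | h
            · exact Or.inl (hmono h)
            · exact Or.inr (hmono h)
          · exact Or.inr (hin w h2)
        · exact Or.inl (hin u h1)

end IsoFive

/-- If `G` has order `n` and minimum degree at least 5, then `ι(G) ≤ 23n/78`. -/
theorem isolation_number_minDegree_five {V : Type*} [Fintype V] (G : SimpleGraph V) (n : ℕ)
    (hn : Fintype.card V = n) (hmin : ∀ v : V, 5 ≤ (G.neighborSet v).ncard) :
    (isolationNumber G : ℝ) ≤ 23 * n / 78 := by
  have hmin' : ∀ v : V, 5 ≤ IsoFive.wd G Finset.univ v := by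
    intro v
    have h := hmin v
    have e : G.neighborSet v = ((Finset.univ.filter (fun w => G.Adj v w) : Finset V) : Set V) := by
      ext x; simp
    rw [e, Set.ncard_coe_finset] at h
    exact h
  obtain ⟨S, hS, hS2⟩ := IsoFive.main G hmin' Finset.univ
    (fun w _ => le_trans (by norm_num) (hmin' w))
  have hPhi : IsoFive.Phi G Finset.univ = 23 * n := by
    simp [IsoFive.Phi, IsoFive.ph, hn, mul_comm]
  rw [hPhi] at hS
  have hle : isolationNumber G ≤ S.card := by
    apply Nat.sInf_le
    refine ⟨(S : Set V), ?_, Set.ncard_coe_finset S⟩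
    intro u v huv
    exact hS2 u (Finset.mem_univ u) v (Finset.mem_univ v) huv
  have h1 : (isolationNumber G : ℝ) ≤ S.card := by exact_mod_cast hle
  have h2 : 78 * (S.card : ℝ) ≤ 23 * n := by exact_mod_cast hS
  linarith
end

section
/- If G is a triangle-free graph of order n with minimum degree at least 5, then ι(G) ≤ 9n/31. -/
open Classical

namespace IsoAux

/-- weight of a dominated vertex with `d` active neighbours -/
def b (d : ℕ) : ℕ := if d = 0 then 0 else min (17 * d + 16) 84

lemma b_mono {m n : ℕ} (h : m ≤ n) : b m ≤ b n := by
  unfold b; split_ifs <;> omega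

lemma b_le (m : ℕ) : b m ≤ 84 := by
  unfold b; split_ifs <;> omega

lemma b_zero : b 0 = 0 := rfl

section
variable {V : Type*} [Fintype V] (G : SimpleGraph V)

/-- number of neighbours of `x` in `W` -/
noncomputable def dg (W : Finset V) (x : V) : ℕ := (W.filter (fun y => G.Adj x y)).card

/-- the potential -/
noncomputable def Phi (W : Finset V) : ℕ := ∑ x, if x ∈ W then 180 else b (dg G W x)

lemma dg_mono {W W' : Finset V} (h : W ⊆ W') (x : V) : dg G W x ≤ dg G W' x :=
  Finset.card_le_card (Finset.filter_subset_filter _ h)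

lemma dg_sdiff {W R : Finset V} (h : R ⊆ W) (x : V) :
    dg G (W \ R) x + dg G R x = dg G W x := by
  unfold dg
  rw [← Finset.card_union_of_disjoint]
  · congr 1
    ext y
    simp only [Finset.mem_union, Finset.mem_filter, Finset.mem_sdiff]
    constructor
    · rintro (h1 | h1)
      · exact ⟨h1.1.1, h1.2⟩
      · exact ⟨h h1.1, h1.2⟩
    · intro h1
      by_cases hy : y ∈ R
      · exact Or.inr ⟨hy, h1.2⟩
      · exact Or.inl ⟨⟨h1.1, hy⟩, h1.2⟩
  · rw [Finset.disjoint_left]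
    intro y h1 h2
    simp only [Finset.mem_filter, Finset.mem_sdiff] at h1 h2
    exact h1.1.2 h2.1

lemma double_count (A B : Finset V) : ∑ x ∈ A, dg G B x = ∑ u ∈ B, dg G A u := by
  unfold dg
  simp only [Finset.card_filter]
  rw [Finset.sum_comm]
  simp only [G.adj_comm]

lemma gain (W R : Finset V) (hR : R ⊆ W) (h : V → ℕ)
    (hh : ∀ x, x ∉ W → h x + b (dg G (W \ R) x) ≤ b (dg G W x)) :
    Phi G (W \ R) + 180 * R.card + ∑ x ∈ Wᶜ, h x
      ≤ Phi G W + ∑ u ∈ R, b (dg G (W \ R) u) := by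
  have e1 : 180 * R.card = ∑ x, if x ∈ R then 180 else 0 := by
    rw [← Finset.sum_filter]; simp [mul_comm]
  have e2 : ∑ x ∈ Wᶜ, h x = ∑ x, if x ∈ W then 0 else h x := by
    rw [← Finset.sum_subset (Finset.subset_univ Wᶜ) (by intro x _ hx; simp at hx; simp [hx])]
    apply Finset.sum_congr rfl
    intro x hx
    simp at hx; simp [hx]
  have e3 : ∑ u ∈ R, b (dg G (W \ R) u) = ∑ x, if x ∈ R then b (dg G (W \ R) x) else 0 := by
    rw [← Finset.sum_filter]; simp
  rw [e1, e2, e3]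
  unfold Phi
  rw [← Finset.sum_add_distrib, ← Finset.sum_add_distrib, ← Finset.sum_add_distrib]
  apply Finset.sum_le_sum
  intro x _
  by_cases hx : x ∈ W
  · by_cases hr : x ∈ R
    · simp [hx, hr]; omega
    · simp [hx, hr]
  · have hr : x ∉ R := fun h => hx (hR h)
    simp [hx, hr]
    have := hh x hx
    omega

lemma gain0 (W R : Finset V) (hR : R ⊆ W) :
    Phi G (W \ R) + 180 * R.card ≤ Phi G W + ∑ u ∈ R, b (dg G (W \ R) u) := by
  have := gain G W R hR (fun _ => 0) (by
    intro x _
    simpa using b_mono (dg_mono G Finset.sdiff_subset x))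
  simpa using this

lemma gainS (W R : Finset V) (hR : R ⊆ W) (s : ℕ)
    (hs : ∀ x, x ∉ W → ∀ m k, m + k = dg G W x → s * k + b m ≤ b (m + k)) :
    Phi G (W \ R) + 180 * R.card + s * ∑ u ∈ R, dg G Wᶜ u
      ≤ Phi G W + ∑ u ∈ R, b (dg G (W \ R) u) := by
  have := gain G W R hR (fun x => s * dg G R x) (by
    intro x hx
    have h1 := dg_sdiff G hR x
    have := hs x hx _ _ h1
    rw [h1] at this
    exact this)
  rw [← Finset.mul_sum, double_count] at this
  exact this

lemma stepA (hmin : ∀ v : V, 5 ≤ dg G Finset.univ v) (W : Finset V) (v : V) (hv : v ∈ W) (p : ℕ)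
    (hp : dg G W v = p) (hmax : ∀ u ∈ W, dg G W u ≤ p) (s : ℕ)
    (hs : ∀ x, x ∉ W → ∀ m k, m + k = dg G W x → s * k + b m ≤ b (m + k)) :
    Phi G (W \ insert v (W.filter (fun y => G.Adj v y))) + 180 * (p + 1)
      + s * ((p + 1) * (5 - p)) ≤ Phi G W + p * b (p - 1) := by
  set N := W.filter (fun y => G.Adj v y) with hN
  have hvN : v ∉ N := by simp [hN]
  have hR : insert v N ⊆ W := by
    rw [Finset.insert_subset_iff]
    exact ⟨hv, Finset.filter_subset _ _⟩
  have hcN : N.card = p := hp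
  have hc : (insert v N).card = p + 1 := by rw [Finset.card_insert_of_notMem hvN, hcN]
  have key := gainS G W _ hR s hs
  rw [hc] at key
  have h1 : (p + 1) * (5 - p) ≤ ∑ u ∈ insert v N, dg G Wᶜ u := by
    rw [← hc, ← smul_eq_mul]
    apply Finset.card_nsmul_le_sum
    intro u hu
    have a1 := hmax u (hR hu)
    have a2 := hmin u
    have a3 := dg_sdiff G (Finset.subset_univ W) u
    rw [← Finset.compl_eq_univ_sdiff] at a3
    omega
  have h2 : ∑ u ∈ insert v N, b (dg G (W \ insert v N) u) ≤ p * b (p - 1) := by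
    rw [Finset.sum_insert hvN]
    have z : dg G (W \ insert v N) v = 0 := by
      unfold dg
      rw [Finset.card_eq_zero, Finset.filter_eq_empty_iff]
      intro y hy hadj
      simp only [Finset.mem_sdiff, Finset.mem_insert, not_or] at hy
      exact hy.2.2 (by simp [hN, hy.1, hadj])
    rw [z, b_zero, zero_add]
    have := Finset.sum_le_card_nsmul N (fun u => b (dg G (W \ insert v N) u)) (b (p - 1)) (by
      intro u hu
      apply b_mono
      have a1 := hmax u (hR (Finset.mem_insert_of_mem hu))
      have a2 := dg_sdiff G hR u
      have a3 : 0 < dg G (insert v N) u := by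
        unfold dg
        rw [Finset.card_pos]
        refine ⟨v, ?_⟩
        simp only [hN, Finset.mem_filter] at hu
        simp [hu.2.symm]
      omega)
    rwa [hcN, smul_eq_mul] at this
  have h3 := Nat.mul_le_mul_left s h1
  omega

lemma stepB (W : Finset V) (v : V) (hv : v ∉ W) (hq : 5 ≤ dg G W v)
    (hmax : ∀ u ∈ W, dg G W u ≤ 3) :
    Phi G (W \ (W.filter (fun y => G.Adj v y))) + 620 ≤ Phi G W := by
  set N := W.filter (fun y => G.Adj v y) with hN
  have hR : N ⊆ W := Finset.filter_subset _ _
  have hcN : N.card = dg G W v := rfl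
  have key := gain G W N hR (fun x => if x = v then 84 else 0) (by
    intro x hx
    by_cases hxv : x = v
    · subst hxv
      have z : dg G (W \ N) x = 0 := by
        have := dg_sdiff G hR x
        have : dg G N x = dg G W x := by
          unfold dg; rw [hN, Finset.filter_filter]; simp
        omega
      rw [z]
      simp only [if_true, b]
      split_ifs <;> omega
    · simpa [hxv] using b_mono (dg_mono G Finset.sdiff_subset x))
  have h1 : ∑ x ∈ Wᶜ, (if x = v then 84 else 0) = 84 := by
    rw [Finset.sum_ite_eq' Wᶜ v (fun _ => 84)]; simp [hv]
  rw [h1, hcN] at key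
  have h2 := Finset.sum_le_card_nsmul N (fun u => b (dg G (W \ N) u)) 67 (by
      intro u hu
      have a1 := hmax u (hR hu)
      exact b_mono (n := 3) ((dg_mono G Finset.sdiff_subset u).trans a1))
  rw [hcN, smul_eq_mul] at h2
  omega

lemma exists_step (htf : ∀ x y z : V, G.Adj x y → G.Adj y z → G.Adj x z → False)
    (hmin : ∀ v : V, 5 ≤ dg G Finset.univ v) (W : Finset V) (hne : W.Nonempty)
    (hact : ∀ u ∈ W, 1 ≤ dg G W u) :
    ∃ (v : V) (R : Finset V), R ⊆ W ∧ R.Nonempty ∧ Phi G (W \ R) + 620 ≤ Phi G W ∧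
      ∀ x ∈ R, ∀ y ∈ W, G.Adj x y → (x = v ∨ G.Adj v x) ∨ (y = v ∨ G.Adj v y) := by
  obtain ⟨v, hv, hvmax⟩ := Finset.exists_max_image W (dg G W) hne
  obtain ⟨p, hp⟩ : ∃ p, p = dg G W v := ⟨_, rfl⟩
  rw [← hp] at hvmax
  have hp1 : 1 ≤ p := hp ▸ hact v hv
  -- option A
  have optA : ∀ s : ℕ, (∀ x, x ∉ W → ∀ m k, m + k = dg G W x → s * k + b m ≤ b (m + k)) →
      p * b (p - 1) + 620 ≤ 180 * (p + 1) + s * ((p + 1) * (5 - p)) → 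
      ∃ (v : V) (R : Finset V), R ⊆ W ∧ R.Nonempty ∧ Phi G (W \ R) + 620 ≤ Phi G W ∧
      ∀ x ∈ R, ∀ y ∈ W, G.Adj x y → (x = v ∨ G.Adj v x) ∨ (y = v ∨ G.Adj v y) := by
    intro s hs hineq
    have key := stepA G hmin W v hv p hp.symm hvmax s hs
    refine ⟨v, insert v (W.filter (fun y => G.Adj v y)), ?_, Finset.insert_nonempty v _, by omega, ?_⟩
    · rw [Finset.insert_subset_iff]
      exact ⟨hv, Finset.filter_subset _ _⟩
    · intro x hx y _ _
      left
      simp only [Finset.mem_insert, Finset.mem_filter] at hx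
      tauto
  have s0 : ∀ x, x ∉ W → ∀ m k, m + k = dg G W x → 0 * k + b m ≤ b (m + k) := by
    intro x _ m k _
    simpa using b_mono (Nat.le_add_right m k)
  by_cases h5 : 5 ≤ p
  · apply optA 0 s0
    have := Nat.mul_le_mul_left p (b_le (p - 1))
    omega
  by_cases h4 : p = 4
  · apply optA 0 s0
    subst h4
    decide
  by_cases h23 : 2 ≤ p
  · by_cases hq : ∃ x, x ∉ W ∧ 5 ≤ dg G W x
    · obtain ⟨x, hx, hxq⟩ := hq
      have key := stepB G W x hx hxq (fun u hu => (hvmax u hu).trans (by omega))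
      refine ⟨x, _, Finset.filter_subset _ _, ?_, key, ?_⟩
      · rw [← Finset.card_pos]
        exact lt_of_lt_of_le (by norm_num) hxq
      · intro y hy z _ _
        simp only [Finset.mem_filter] at hy
        tauto
    · push Not at hq
      apply optA 17
      · intro x hx m k hmk
        have := hq x hx
        unfold b
        split_ifs <;> omega
      · have : p = 2 ∨ p = 3 := by omega
        rcases this with rfl | rfl <;> decide
  have hp_one : p = 1 := by omega
  by_cases hq : ∃ x, x ∉ W ∧ 2 ≤ dg G W x
  · obtain ⟨x, hx, hxq⟩ := hq
    obtain ⟨u1, hu1, u2, hu2, hne12⟩ := Finset.one_lt_card.1 (show 1 < (W.filter (fun y => G.Adj x y)).card from hxq)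
    simp only [Finset.mem_filter] at hu1 hu2
    have uniq : ∀ u ∈ W, ∃ w ∈ W, G.Adj u w ∧ ∀ y ∈ W, G.Adj u y → y = w := by
      intro u hu
      have : dg G W u = 1 := le_antisymm (hp_one ▸ hvmax u hu) (hact u hu)
      obtain ⟨w, hw⟩ := Finset.card_eq_one.1 this
      have hw1 : w ∈ W.filter (fun y => G.Adj u y) := by rw [hw]; simp
      simp only [Finset.mem_filter] at hw1
      refine ⟨w, hw1.1, hw1.2, fun y hy hadj => ?_⟩
      have : y ∈ W.filter (fun y => G.Adj u y) := by simp [hy, hadj]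
      rw [hw] at this
      simpa using this
    obtain ⟨w1, hw1, ha1, hun1⟩ := uniq u1 hu1.1
    obtain ⟨w2, hw2, ha2, hun2⟩ := uniq u2 hu2.1
    obtain ⟨z1, -, -, hz1⟩ := uniq w1 hw1
    obtain ⟨z2, -, -, hz2⟩ := uniq w2 hw2
    have e1 := hz1 u1 hu1.1 ha1.symm
    have e2 := hz2 u2 hu2.1 ha2.symm
    subst e1 e2
    have n12 : ¬ G.Adj u1 u2 := fun h => htf x u1 u2 hu1.2 h hu2.2
    have d1 : u1 ≠ w2 := by rintro rfl; exact n12 ha2.symm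
    have d2 : u2 ≠ w1 := by rintro rfl; exact n12 ha1
    have d3 : w1 ≠ w2 := by
      rintro rfl
      exact hne12 (hz1 u2 hu2.1 ha2.symm).symm
    have d4 : u1 ≠ w1 := ha1.ne
    have d5 : u2 ≠ w2 := ha2.ne
    have hR : ({u1, w1, u2, w2} : Finset V) ⊆ W := by
      intro y hy
      simp only [Finset.mem_insert, Finset.mem_singleton] at hy
      rcases hy with rfl | rfl | rfl | rfl
      · exact hu1.1
      · exact hw1
      · exact hu2.1
      · exact hw2
    have hcl : ∀ y ∈ ({u1, w1, u2, w2} : Finset V), ∀ t ∈ W, G.Adj y t →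
        t ∈ ({u1, w1, u2, w2} : Finset V) ∧ ((y = u1 ∨ t = u1) ∨ (y = u2 ∨ t = u2)) := by
      intro y hy t ht hadj
      simp only [Finset.mem_insert, Finset.mem_singleton] at hy ⊢
      rcases hy with rfl | rfl | rfl | rfl
      · have := hun1 t ht hadj; tauto
      · have := hz1 t ht hadj; tauto
      · have := hun2 t ht hadj; tauto
      · have := hz2 t ht hadj; tauto
    have hcard : ({u1, w1, u2, w2} : Finset V).card = 4 := by
      rw [Finset.card_insert_of_notMem, Finset.card_insert_of_notMem,
        Finset.card_insert_of_notMem, Finset.card_singleton]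
      · simpa using d5
      · simp only [Finset.mem_insert, Finset.mem_singleton, not_or]
        exact ⟨d2.symm, d3⟩
      · simp only [Finset.mem_insert, Finset.mem_singleton, not_or]
        exact ⟨d4, hne12, d1⟩
    refine ⟨x, {u1, w1, u2, w2}, hR, by simp, ?_, ?_⟩
    · have key := gain0 G W _ hR
      rw [hcard] at key
      have hz : ∑ u ∈ ({u1, w1, u2, w2} : Finset V),
          b (dg G (W \ {u1, w1, u2, w2}) u) = 0 := by
        apply Finset.sum_eq_zero
        intro u hu
        have : dg G (W \ {u1, w1, u2, w2}) u = 0 := by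
          unfold dg
          rw [Finset.card_eq_zero, Finset.filter_eq_empty_iff]
          intro y hy hadj
          rw [Finset.mem_sdiff] at hy
          exact hy.2 (hcl u hu y hy.1 hadj).1
        rw [this, b_zero]
      omega
    · intro y hy t ht hadj
      rcases (hcl y hy t ht hadj).2 with (rfl | rfl) | (rfl | rfl)
      · exact Or.inl (Or.inr hu1.2)
      · exact Or.inr (Or.inr hu1.2)
      · exact Or.inl (Or.inr hu2.2)
      · exact Or.inr (Or.inr hu2.2)
  · push Not at hq
    apply optA 33
    · intro x hx m k hmk
      have := hq x hx
      unfold b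
      split_ifs <;> omega
    · subst hp_one; decide

lemma main_ind (htf : ∀ x y z : V, G.Adj x y → G.Adj y z → G.Adj x z → False)
    (hmin : ∀ v : V, 5 ≤ dg G Finset.univ v) (n : ℕ) : ∀ W : Finset V, W.card = n →
    ∃ S : Finset V, 620 * S.card ≤ Phi G W ∧ ∀ x ∈ W, ∀ y ∈ W, G.Adj x y →
      (x ∈ closedNbhd G (S : Set V) ∨ y ∈ closedNbhd G (S : Set V)) := by
  induction n using Nat.strong_induction_on with
  | _ n ih =>
  intro W hW
  by_cases hne : W.Nonempty
  swap
  · rw [Finset.not_nonempty_iff_eq_empty] at hne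
    subst hne
    exact ⟨∅, by simp, by simp⟩
  by_cases hact : ∀ u ∈ W, 1 ≤ dg G W u
  · obtain ⟨v, R, hR, hRne, hPhi, hcov⟩ := exists_step G htf hmin W hne hact
    have hlt : (W \ R).card < n := by
      rw [← hW]
      apply Finset.card_lt_card
      exact Finset.sdiff_ssubset hR hRne
    obtain ⟨S, hS, hS2⟩ := ih _ hlt (W \ R) rfl
    have hmono : ∀ z, z ∈ closedNbhd G (S : Set V) →
        z ∈ closedNbhd G ((insert v S : Finset V) : Set V) := by
      rintro z (hz | ⟨u, hu, huz⟩)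
      · exact Or.inl (by simpa using Or.inr hz)
      · exact Or.inr ⟨u, by simpa using Or.inr hu, huz⟩
    have hv : ∀ z, (z = v ∨ G.Adj v z) →
        z ∈ closedNbhd G ((insert v S : Finset V) : Set V) := by
      rintro z (rfl | hz)
      · exact Or.inl (by simp)
      · exact Or.inr ⟨v, by simp, hz⟩
    refine ⟨insert v S, ?_, ?_⟩
    · have := Finset.card_insert_le v S
      omega
    · intro x hx y hy hadj
      by_cases hxR : x ∈ R
      · exact (hcov x hxR y hy hadj).imp (hv x) (hv y)
      by_cases hyR : y ∈ R
      · exact ((hcov y hyR x hx hadj.symm).imp (hv y) (hv x)).symm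
      exact (hS2 x (by simp [hx, hxR]) y (by simp [hy, hyR]) hadj).imp (hmono x) (hmono y)
  · push Not at hact
    obtain ⟨u, hu, hd⟩ := hact
    have hd0 : dg G W u = 0 := by omega
    have hR : ({u} : Finset V) ⊆ W := by simpa using hu
    have hlt : (W \ {u}).card < n := by
      rw [← hW]
      exact Finset.card_lt_card (Finset.sdiff_ssubset hR (by simp))
    obtain ⟨S, hS, hS2⟩ := ih _ hlt (W \ {u}) rfl
    have hiso : ∀ y ∈ W, ¬ G.Adj u y := by
      unfold dg at hd0
      rw [Finset.card_eq_zero, Finset.filter_eq_empty_iff] at hd0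
      exact fun y hy => hd0 hy
    refine ⟨S, ?_, ?_⟩
    · have key := gain0 G W {u} hR
      have := b_le (dg G (W \ {u}) u)
      simp only [Finset.card_singleton, Finset.sum_singleton] at key
      omega
    · intro x hx y hy hadj
      have hxu : x ≠ u := by rintro rfl; exact hiso y hy hadj
      have hyu : y ≠ u := by rintro rfl; exact hiso x hx hadj.symm
      exact hS2 x (by simp [hx, hxu]) y (by simp [hy, hyu]) hadj

end
end IsoAux

/-- If `G` is triangle-free of order `n` with minimum degree at least 5,
then `ι(G) ≤ 9n/31`. -/
theorem isolation_number_triangleFree_minDegree_five {V : Type*} [Fintype V]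
    (G : SimpleGraph V) (n : ℕ) (hn : Fintype.card V = n)
    (htf : G.CliqueFree 3) (hmin : ∀ v : V, 5 ≤ (G.neighborSet v).ncard) :
    (isolationNumber G : ℝ) ≤ 9 * n / 31 := by
  have htf' : ∀ x y z : V, G.Adj x y → G.Adj y z → G.Adj x z → False := by
    intro x y z h1 h2 h3
    exact htf {x, y, z} (SimpleGraph.is3Clique_triple_iff.2 ⟨h1, h3, h2⟩)
  have hmin' : ∀ v : V, 5 ≤ IsoAux.dg G Finset.univ v := by
    intro v
    have h := hmin v
    rw [Set.ncard_eq_toFinset_card'] at h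
    refine h.trans (le_of_eq ?_)
    unfold IsoAux.dg
    congr 1
    ext y
    simp
  obtain ⟨S, hS, hS2⟩ := IsoAux.main_ind G htf' hmin' _ Finset.univ rfl
  have hPhi : IsoAux.Phi G Finset.univ = 180 * n := by
    unfold IsoAux.Phi
    simp [hn, mul_comm]
  have hle : isolationNumber G ≤ S.card := by
    apply Nat.sInf_le
    refine ⟨(S : Set V), ?_, Set.ncard_coe_finset S⟩
    intro u v huv
    exact hS2 u (Finset.mem_univ _) v (Finset.mem_univ _) huv
  have h3 : 31 * isolationNumber G ≤ 9 * n := by omega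
  have h4 : (31 : ℝ) * (isolationNumber G : ℝ) ≤ 9 * n := by exact_mod_cast h3
  rw [le_div_iff₀ (by norm_num)]
  linarith
end

section
/- If G is a graph of order n with minimum degree at least 3 and girth at least 5, then ι(G) ≤ 11n/34. -/
open Classical

namespace Iso

set_option linter.unusedSectionVars false

variable {V : Type*} [Fintype V] (G : SimpleGraph V)

noncomputable def d (W : Finset V) (v : V) : ℕ := (W.filter (fun w => G.Adj v w)).card

def b (i : ℕ) : ℕ := if i = 0 then 0 else if i = 1 then 9 else if i = 2 then 10 else 11

lemma b_zero : b 0 = 0 := rfl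

lemma b_le (i : ℕ) : b i ≤ 11 := by unfold b; split_ifs <;> omega

lemma b_mono {i j : ℕ} (h : i ≤ j) : b i ≤ b j := by unfold b; split_ifs <;> omega

lemma b_c0 (i j : ℕ) (h : j ≤ i) : 0 * (i - j) + b j ≤ b i := by
  simpa using b_mono h

lemma b_c1 (i j : ℕ) (h : j ≤ i) (hi : i ≤ 3) : 1 * (i - j) + b j ≤ b i := by
  unfold b; split_ifs <;> omega

lemma b_c9 (i j : ℕ) (h : j ≤ i) (hi : i ≤ 1) : 9 * (i - j) + b j ≤ b i := by
  unfold b; split_ifs <;> omega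

noncomputable def Phi (W : Finset V) : ℕ := 33 * W.card + ∑ v ∈ Wᶜ, b (d G W v)

lemma d_split {W R : Finset V} (h : R ⊆ W) (v : V) : d G W v = d G R v + d G (W \ R) v := by
  unfold d
  rw [← Finset.card_union_of_disjoint, ← Finset.filter_union, Finset.union_sdiff_of_subset h]
  exact Finset.disjoint_filter_filter Finset.disjoint_sdiff

lemma d_comm (A B : Finset V) : ∑ v ∈ A, d G B v = ∑ r ∈ B, d G A r := by
  unfold d
  simp only [Finset.card_filter]
  rw [Finset.sum_comm]
  simp only [G.adj_comm]

lemma loss {W R : Finset V} (hR : R ⊆ W) (hmin : ∀ v, 3 ≤ d G Finset.univ v) (c : ℕ)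
    (hc : ∀ v, v ∉ W → ∀ j ≤ d G W v, c * (d G W v - j) + b j ≤ b (d G W v)) :
    Phi G (W \ R) + 33 * R.card + c * ∑ r ∈ R, (3 - d G W r) ≤
      Phi G W + ∑ r ∈ R, b (d G (W \ R) r) := by
  have h1 : (W \ R)ᶜ = Wᶜ ∪ R := by
    ext v; simp only [Finset.mem_compl, Finset.mem_sdiff, Finset.mem_union]; tauto
  have h2 : Disjoint Wᶜ R := by
    rw [Finset.disjoint_left]; intro v hv hr; exact (Finset.mem_compl.1 hv) (hR hr)
  have h3 : (W \ R).card + R.card = W.card := Finset.card_sdiff_add_card_eq_card hR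
  have h4 : ∑ v ∈ Wᶜ, (c * d G R v + b (d G (W \ R) v)) ≤ ∑ v ∈ Wᶜ, b (d G W v) := by
    apply Finset.sum_le_sum
    intro v hv
    have := hc v (Finset.mem_compl.1 hv) (d G (W \ R) v) (by rw [d_split G hR v]; omega)
    have e : d G W v - d G (W \ R) v = d G R v := by rw [d_split G hR v]; omega
    rwa [e] at this
  have h5 : c * ∑ r ∈ R, (3 - d G W r) ≤ c * ∑ v ∈ Wᶜ, d G R v := by
    rw [d_comm G Wᶜ R]
    apply Nat.mul_le_mul_left
    apply Finset.sum_le_sum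
    intro r _
    have := hmin r
    rw [d_split G (Finset.subset_univ W) r, ← Finset.compl_eq_univ_sdiff] at this
    omega
  rw [Finset.sum_add_distrib, ← Finset.mul_sum] at h4
  unfold Phi
  rw [h1, Finset.sum_union h2]
  omega

def Dom (S : Finset V) (v : V) : Prop := v ∈ S ∨ ∃ u ∈ S, G.Adj u v

lemma Dom.mono {S T : Finset V} (h : S ⊆ T) {v : V} (hv : Dom G S v) : Dom G T v := by
  rcases hv with hv | ⟨u, hu, ha⟩
  · exact Or.inl (h hv)
  · exact Or.inr ⟨u, h hu, ha⟩

def P (W : Finset V) : Prop :=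
  ∃ S : Finset V, (∀ u ∈ W, ∀ v ∈ W, G.Adj u v → Dom G S u ∨ Dom G S v) ∧
    102 * S.card ≤ Phi G W

lemma step {W : Finset V} (ih : ∀ W', W' ⊂ W → P G W') (R T : Finset V) (hR : R ⊆ W)
    (hne : R.Nonempty)
    (hcov : ∀ u ∈ R, ∀ v ∈ W, G.Adj u v → Dom G T u ∨ Dom G T v)
    (hphi : 102 * T.card + Phi G (W \ R) ≤ Phi G W) : P G W := by
  obtain ⟨S, hS, hc⟩ := ih (W \ R) (Finset.sdiff_ssubset hR hne)
  refine ⟨S ∪ T, ?_, ?_⟩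
  · intro u hu v hv huv
    have l := @Dom.mono V _ G S (S ∪ T) Finset.subset_union_left
    have r := @Dom.mono V _ G T (S ∪ T) Finset.subset_union_right
    by_cases h1 : u ∈ R
    · rcases hcov u h1 v hv huv with h | h
      · exact Or.inl (r h)
      · exact Or.inr (r h)
    by_cases h2 : v ∈ R
    · rcases hcov v h2 u hu huv.symm with h | h
      · exact Or.inr (r h)
      · exact Or.inl (r h)
    rcases hS u (Finset.mem_sdiff.2 ⟨hu, h1⟩) v (Finset.mem_sdiff.2 ⟨hv, h2⟩) huv with h | h
    · exact Or.inl (l h)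
    · exact Or.inr (l h)
  · have := Finset.card_union_le S T
    omega

/-- Closed removal. -/
lemma step_closed {W : Finset V} (ih : ∀ W', W' ⊂ W → P G W')
    (hmin : ∀ v, 3 ≤ d G Finset.univ v) (c : ℕ)
    (hc : ∀ v, v ∉ W → ∀ j ≤ d G W v, c * (d G W v - j) + b j ≤ b (d G W v))
    (R T : Finset V) (hR : R ⊆ W) (hne : R.Nonempty)
    (hcl : ∀ u ∈ R, ∀ v ∈ W, G.Adj u v → v ∈ R)
    (hcov : ∀ u ∈ R, ∀ v ∈ R, G.Adj u v → Dom G T u ∨ Dom G T v)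
    (hphi : 102 * T.card ≤ 33 * R.card + c * ∑ r ∈ R, (3 - d G W r)) : P G W := by
  apply step G ih R T hR hne
  · intro u hu v hv huv
    exact hcov u hu v (hcl u hu v hv huv) huv
  · have h := loss G hR hmin c hc
    have h0 : ∑ r ∈ R, b (d G (W \ R) r) = 0 := by
      apply Finset.sum_eq_zero
      intro r hr
      have : d G (W \ R) r = 0 := by
        unfold d
        rw [Finset.card_eq_zero, Finset.filter_eq_empty_iff]
        intro v hv ha
        rw [Finset.mem_sdiff] at hv
        exact hv.2 (hcl r hr v hv.1 ha)
      rw [this, b_zero]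
    omega

lemma d_mono {A B : Finset V} (h : A ⊆ B) (v : V) : d G A v ≤ d G B v :=
  Finset.card_le_card (Finset.filter_subset_filter _ h)

lemma d_lt {A B : Finset V} (h : A ⊆ B) {v w : V} (hw : w ∈ B) (hw' : w ∉ A)
    (ha : G.Adj v w) : d G A v + 1 ≤ d G B v := by
  apply Finset.card_lt_card
  rw [Finset.ssubset_iff_of_subset (Finset.filter_subset_filter _ h)]
  exact ⟨w, by simp [hw, ha], by simp [hw']⟩

/-- cases 1 and 2 -/
lemma case12 {W : Finset V} (ih : ∀ W', W' ⊂ W → P G W')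
    (hmin : ∀ v, 3 ≤ d G Finset.univ v) (v : V) (hv : v ∈ W)
    (h : 4 ≤ d G W v ∨ (d G W v = 3 ∧ ∀ u ∈ W, d G W u ≤ 3)) : P G W := by
  set A := W.filter (fun w => G.Adj v w) with hA
  have hvA : v ∉ A := by simp [hA]
  have hR : insert v A ⊆ W := by
    intro x hx
    rcases Finset.mem_insert.1 hx with rfl | hx
    · exact hv
    · exact (Finset.mem_filter.1 hx).1
  apply step G ih (insert v A) {v} hR ⟨v, by simp⟩
  · intro u hu w hw huw
    left
    rcases Finset.mem_insert.1 hu with rfl | hx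
    · left; simp
    · right; exact ⟨v, by simp, (Finset.mem_filter.1 hx).2⟩
  · have hl := loss G hR hmin 0 (fun v _ j hj => b_c0 _ _ hj)
    rw [Finset.sum_insert hvA, Finset.card_insert_of_notMem hvA] at hl
    have hv0 : d G (W \ insert v A) v = 0 := by
      unfold d
      rw [Finset.card_eq_zero, Finset.filter_eq_empty_iff]
      intro w hw ha
      simp [hA] at hw
      exact hw.2.2 hw.1 ha
    rw [Finset.sum_insert hvA, hv0, b_zero] at hl
    have hd : A.card = d G W v := rfl
    rw [Finset.card_singleton]
    rcases h with h | ⟨h, h3⟩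
    · have : ∑ r ∈ A, b (d G (W \ insert v A) r) ≤ ∑ r ∈ A, 11 :=
        Finset.sum_le_sum (fun r _ => b_le _)
      rw [Finset.sum_const, smul_eq_mul] at this
      omega
    · have : ∑ r ∈ A, b (d G (W \ insert v A) r) ≤ ∑ r ∈ A, 10 := by
        apply Finset.sum_le_sum
        intro r hr
        have hr := Finset.mem_filter.1 hr
        have h1 : d G (W \ insert v A) r + 1 ≤ d G W r :=
          d_lt G Finset.sdiff_subset hv (by simp) hr.2.symm
        have := h3 r hr.1
        calc _ ≤ b 2 := b_mono (by omega)
          _ = 10 := rfl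
      rw [Finset.sum_const, smul_eq_mul] at this
      omega

lemma case3 {W : Finset V} (ih : ∀ W', W' ⊂ W → P G W')
    (h2 : ∀ u ∈ W, d G W u ≤ 2) (x : V) (hx : x ∉ W) (h : 4 ≤ d G W x) : P G W := by
  set A := W.filter (fun w => G.Adj x w) with hA
  have hd : A.card = d G W x := rfl
  have hR : A ⊆ W := Finset.filter_subset _ _
  apply step G ih A {x} hR (Finset.card_pos.1 (by omega))
  · intro u hu w hw huw
    left; right; exact ⟨x, by simp, (Finset.mem_filter.1 hu).2⟩
  · have h1 : (W \ A)ᶜ = Wᶜ ∪ A := by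
      ext v; simp only [Finset.mem_compl, Finset.mem_sdiff, Finset.mem_union]; tauto
    have h2' : Disjoint Wᶜ A := by
      rw [Finset.disjoint_left]; intro v hv hr; exact (Finset.mem_compl.1 hv) (hR hr)
    have h3 : (W \ A).card + A.card = W.card := Finset.card_sdiff_add_card_eq_card hR
    have hx' : x ∈ Wᶜ := by simpa using hx
    have hx0 : d G (W \ A) x = 0 := by
      unfold d
      rw [Finset.card_eq_zero, Finset.filter_eq_empty_iff]
      intro w hw ha
      simp [hA] at hw
      exact hw.2 hw.1 ha
    have hx1 : b (d G W x) = 11 := by unfold b; split_ifs <;> omega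
    have hs : ∑ r ∈ A, b (d G (W \ A) r) ≤ ∑ r ∈ A, 10 := by
      apply Finset.sum_le_sum
      intro r hr
      have := h2 r (hR hr)
      have := d_mono G (Finset.sdiff_subset : W \ A ⊆ W) r
      calc _ ≤ b 2 := b_mono (by omega)
          _ = 10 := rfl
    rw [Finset.sum_const, smul_eq_mul] at hs
    have hs2 : ∑ v ∈ Wᶜ.erase x, b (d G (W \ A) v) ≤ ∑ v ∈ Wᶜ.erase x, b (d G W v) :=
      Finset.sum_le_sum (fun v _ => b_mono (d_mono G Finset.sdiff_subset v))
    unfold Phi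
    rw [h1, Finset.sum_union h2', ← Finset.add_sum_erase _ _ hx', ← Finset.add_sum_erase _ _ hx',
      hx0, hx1, b_zero, Finset.card_singleton]
    omega

lemma other {W : Finset V} {v a : V} (h : d G W v = 2) (ha : a ∈ W) (hva : G.Adj v a) :
    ∃ c ∈ W, c ≠ a ∧ G.Adj v c ∧ ∀ w ∈ W, G.Adj v w → w = a ∨ w = c := by
  obtain ⟨x, y, hxy, he⟩ := Finset.card_eq_two.1 h
  have hm : ∀ w, (w ∈ W ∧ G.Adj v w) ↔ (w = x ∨ w = y) := by
    intro w
    have : w ∈ W.filter (fun w => G.Adj v w) ↔ w ∈ ({x, y} : Finset V) := by rw [he]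
    simpa using this
  have hx := (hm x).2 (Or.inl rfl)
  have hy := (hm y).2 (Or.inr rfl)
  rcases (hm a).1 ⟨ha, hva⟩ with rfl | rfl
  · exact ⟨y, hy.1, hxy.symm, hy.2, fun w hw hvw => (hm w).1 ⟨hw, hvw⟩⟩
  · exact ⟨x, hx.1, hxy, hx.2, fun w hw hvw => ((hm w).1 ⟨hw, hvw⟩).symm⟩

lemma only {W : Finset V} {v a : V} (h : d G W v = 1) (ha : a ∈ W) (hva : G.Adj v a) :
    ∀ w ∈ W, G.Adj v w → w = a := by
  intro w hw hvw
  obtain ⟨x, he⟩ := Finset.card_eq_one.1 h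
  have hm : ∀ w, (w ∈ W ∧ G.Adj v w) ↔ (w = x) := by
    intro w
    have : w ∈ W.filter (fun w => G.Adj v w) ↔ w ∈ ({x} : Finset V) := by rw [he]
    simpa using this
  rw [(hm w).1 ⟨hw, hvw⟩, (hm a).1 ⟨ha, hva⟩]

lemma exists_nb {W : Finset V} {v : V} (h : 1 ≤ d G W v) : ∃ a ∈ W, G.Adj v a := by
  obtain ⟨a, ha⟩ := Finset.card_pos.1 h
  exact ⟨a, Finset.mem_filter.1 ha⟩

lemma d_zero {W R : Finset V} {r : V} (h : ∀ w ∈ W, G.Adj r w → w ∈ R) : d G (W \ R) r = 0 := by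
  unfold d
  rw [Finset.card_eq_zero, Finset.filter_eq_empty_iff]
  intro v hv ha
  rw [Finset.mem_sdiff] at hv
  exact hv.2 (h v hv.1 ha)

lemma step_loose {W : Finset V} (ih : ∀ W', W' ⊂ W → P G W')
    (hmin : ∀ v, 3 ≤ d G Finset.univ v)
    (R T : Finset V) (hR : R ⊆ W) (hne : R.Nonempty)
    (hcov : ∀ u ∈ R, ∀ v ∈ W, G.Adj u v → Dom G T u ∨ Dom G T v)
    (hphi : 102 * T.card + ∑ r ∈ R, b (d G (W \ R) r) ≤ 33 * R.card) : P G W := by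
  apply step G ih R T hR hne hcov
  have h := loss G hR hmin 0 (fun v _ j hj => b_c0 _ _ hj)
  omega

/-- A path end. -/
lemma case4a {W : Finset V} (ih : ∀ W', W' ⊂ W → P G W')
    (hmin : ∀ v, 3 ≤ d G Finset.univ v) (h1 : ∀ u ∈ W, 1 ≤ d G W u) (h2 : ∀ u ∈ W, d G W u ≤ 2)
    (ho : ∀ x, x ∉ W → d G W x ≤ 3) (v u : V) (hv : v ∈ W) (hu : u ∈ W) (hvu : G.Adj v u)
    (dv : d G W v = 1) (du : d G W u = 2) : P G W := by
  have ov := only G dv hu hvu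
  obtain ⟨w, hw, hwv, huw, ou⟩ := other G du hv hvu.symm
  have n1 := hvu.ne
  have n2 := huw.ne
  by_cases dw : d G W w = 1
  · have ow := only G dw hu huw.symm
    apply step_closed G ih hmin 1 (fun x hx j hj => b_c1 _ _ hj (ho x hx)) {v, u, w} {u}
    · intro x hx
      simp only [Finset.mem_insert, Finset.mem_singleton] at hx
      rcases hx with rfl | rfl | rfl <;> assumption
    · exact ⟨v, by simp⟩
    · intro x hx y hy hxy
      simp only [Finset.mem_insert, Finset.mem_singleton] at hx ⊢
      rcases hx with rfl | rfl | rfl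
      · have := ov y hy hxy; tauto
      · have := ou y hy hxy; tauto
      · have := ow y hy hxy; tauto
    · intro x hx y hy hxy
      simp only [Finset.mem_insert, Finset.mem_singleton] at hx
      left
      rcases hx with rfl | rfl | rfl
      · exact Or.inr ⟨u, by simp, hvu.symm⟩
      · exact Or.inl (by simp)
      · exact Or.inr ⟨u, by simp, huw⟩
    · have e1 : v ∉ ({u, w} : Finset V) := by simp [n1, hwv.symm]
      have e2 : u ∉ ({w} : Finset V) := by simp [n2]
      rw [Finset.sum_insert e1, Finset.sum_insert e2, Finset.card_insert_of_notMem e1,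
        Finset.card_insert_of_notMem e2, Finset.sum_singleton, dv, du, dw]
      simp
  · have dw2 : d G W w = 2 := by have := h1 w hw; have := h2 w hw; omega
    obtain ⟨x, hx, hxu, hwx, ow⟩ := other G dw2 hu huw.symm
    have n3 := hwx.ne
    have n4 : x ≠ v := by
      rintro rfl
      exact n2 (ov w hw hwx.symm).symm
    have e1 : v ∉ ({u, w, x} : Finset V) := by simp [n1, hwv.symm, n4.symm]
    have e2 : u ∉ ({w, x} : Finset V) := by simp [n2, hxu.symm]
    have e3 : w ∉ ({x} : Finset V) := by simp [n3]
    apply step_loose G ih hmin {v, u, w, x} {w}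
    · intro y hy
      simp only [Finset.mem_insert, Finset.mem_singleton] at hy
      rcases hy with rfl | rfl | rfl | rfl <;> assumption
    · exact ⟨v, by simp⟩
    · intro y hy z hz hyz
      simp only [Finset.mem_insert, Finset.mem_singleton] at hy
      rcases hy with rfl | rfl | rfl | rfl
      · right
        rw [ov z hz hyz]
        exact Or.inr ⟨w, by simp, huw.symm⟩
      · left; exact Or.inr ⟨w, by simp, huw.symm⟩
      · left; left; simp
      · left; exact Or.inr ⟨w, by simp, hwx⟩
    · have z1 : d G (W \ {v, u, w, x}) v = 0 := by
        apply d_zero; intro y hy hvy; rw [ov y hy hvy]; simp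
      have z2 : d G (W \ {v, u, w, x}) u = 0 := by
        apply d_zero; intro y hy hvy; rcases ou y hy hvy with rfl | rfl <;> simp
      have z3 : d G (W \ {v, u, w, x}) w = 0 := by
        apply d_zero; intro y hy hvy; rcases ow y hy hvy with rfl | rfl <;> simp
      have z4 : d G (W \ {v, u, w, x}) x + 1 ≤ d G W x :=
        d_lt G Finset.sdiff_subset hw (by simp) hwx.symm
      have z5 : b (d G (W \ {v, u, w, x}) x) ≤ b 1 := b_mono (by have := h2 x hx; omega)
      have z6 : b 1 = 9 := rfl
      rw [Finset.sum_insert e1, Finset.sum_insert e2, Finset.sum_insert e3,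
        Finset.card_insert_of_notMem e1,
        Finset.card_insert_of_notMem e2, Finset.card_insert_of_notMem e3, Finset.sum_singleton,
        z1, z2, z3, b_zero]
      simp only [Finset.card_singleton]
      omega

/-- The piece of a vertex `y`: an edge or a five-cycle. -/
def Piece (W : Finset V) (y : V) : Prop :=
  ∃ R T : Finset V, R ⊆ W ∧ y ∈ R ∧ (∀ u ∈ R, ∀ v ∈ W, G.Adj u v → v ∈ R) ∧
    R.card = 2 + 3 * T.card ∧ T.card ≤ 1 ∧
    (∀ u ∈ R, ∀ v ∈ R, G.Adj u v → (u = y ∨ Dom G T u) ∨ (v = y ∨ Dom G T v)) ∧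
    (∀ w ∈ R, w = y ∨ G.Adj y w ∨ ∃ q ∈ R, G.Adj y q ∧ G.Adj q w) ∧
    4 + T.card ≤ ∑ r ∈ R, (3 - d G W r)

lemma piece1 {W : Finset V} (v u : V) (hv : v ∈ W) (hu : u ∈ W) (hvu : G.Adj v u)
    (dv : d G W v = 1) (du : d G W u = 1) : Piece G W v := by
  have ov := only G dv hu hvu
  have ou := only G du hv hvu.symm
  have e1 : v ∉ ({u} : Finset V) := by simp [hvu.ne]
  refine ⟨{v, u}, ∅, ?_, by simp, ?_, ?_, by simp, ?_, ?_, ?_⟩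
  · intro y hy
    simp only [Finset.mem_insert, Finset.mem_singleton] at hy
    rcases hy with rfl | rfl <;> assumption
  · intro x hx y hy hxy
    simp only [Finset.mem_insert, Finset.mem_singleton] at hx ⊢
    rcases hx with rfl | rfl
    · have := ov y hy hxy; tauto
    · have := ou y hy hxy; tauto
  · rw [Finset.card_insert_of_notMem e1]; simp
  · intro x hx y hy hxy
    simp only [Finset.mem_insert, Finset.mem_singleton] at hx
    rcases hx with rfl | rfl
    · left; left; rfl
    · right; left; exact ou y (by
        rcases Finset.mem_insert.1 hy with rfl | h
        · exact hv
        · rw [Finset.mem_singleton.1 h]; exact hu) hxy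
  · intro x hx
    simp only [Finset.mem_insert, Finset.mem_singleton] at hx
    rcases hx with rfl | rfl
    · left; rfl
    · right; left; exact hvu
  · rw [Finset.sum_insert e1, Finset.sum_singleton, dv, du]; simp

set_option maxHeartbeats 2000000 in
/-- A vertex of degree two: reduce or find a five-cycle. -/
lemma case4b {W : Finset V} (ih : ∀ W', W' ⊂ W → P G W')
    (h3 : ∀ a b c, G.Adj a b → G.Adj b c → G.Adj c a → False)
    (h4 : ∀ a b c e, G.Adj a b → G.Adj b c → G.Adj c e → G.Adj e a → a ≠ c → b ≠ e → False)
    (hmin : ∀ v, 3 ≤ d G Finset.univ v)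
    (hs : ∀ u ∈ W, ∀ v ∈ W, G.Adj u v → d G W u = 2 → d G W v = 2)
    (ho : ∀ x, x ∉ W → d G W x ≤ 3) (v1 : V) (w1 : v1 ∈ W)
    (d1 : d G W v1 = 2) : P G W ∨ Piece G W v1 := by
  obtain ⟨v2, w2, a12⟩ := exists_nb G (W := W) (v := v1) (by omega)
  have d2 := hs _ w1 _ w2 a12 d1
  obtain ⟨v3, w3, n31, a23, o2⟩ := other G d2 w1 a12.symm
  have d3 := hs _ w2 _ w3 a23 d2
  obtain ⟨v4, w4, n42, a34, o3⟩ := other G d3 w2 a23.symm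
  have d4 := hs _ w3 _ w4 a34 d3
  obtain ⟨v5, w5, n53, a45, o4⟩ := other G d4 w3 a34.symm
  have d5 := hs _ w4 _ w5 a45 d4
  obtain ⟨v6, w6, n64, a56, o5⟩ := other G d5 w4 a45.symm
  have d6 := hs _ w5 _ w6 a56 d5
  obtain ⟨v7, w7, n75, a67, o6⟩ := other G d6 w5 a56.symm
  have d7 := hs _ w6 _ w7 a67 d6
  have n12 := a12.ne
  have n23 := a23.ne
  have n34 := a34.ne
  have n45 := a45.ne
  have n56 := a56.ne
  have n67 := a67.ne
  have n41 : v4 ≠ v1 := by rintro rfl; exact h3 _ _ _ a12 a23 a34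
  have n51 : v5 ≠ v1 := by rintro rfl; exact h4 _ _ _ _ a12 a23 a34 a45 n31.symm n42.symm
  have n52 : v5 ≠ v2 := by rintro rfl; exact h3 _ _ _ a23 a34 a45
  have n63 : v6 ≠ v3 := by rintro rfl; exact h3 _ _ _ a34 a45 a56
  have n62 : v6 ≠ v2 := by rintro rfl; exact h4 _ _ _ _ a23 a34 a45 a56 n42.symm n53.symm
  have e4 : v4 ∉ ({v5} : Finset V) := by simp [n45]
  have e3 : v3 ∉ ({v4, v5} : Finset V) := by simp [n34, n53.symm]
  have e2 : v2 ∉ ({v3, v4, v5} : Finset V) := by simp [n23, n42.symm, n52.symm]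
  have e1 : v1 ∉ ({v2, v3, v4, v5} : Finset V) := by simp [n12, n31.symm, n41.symm, n51.symm]
  by_cases c5 : v6 = v1
  · right
    subst c5
    have o1 : ∀ w ∈ W, G.Adj v6 w → w = v2 ∨ w = v5 := by
      obtain ⟨z, hz, hz2, hz1, oz⟩ := other G d1 w2 a12
      rcases oz _ w5 a56.symm with h | h
      · exact absurd h n52
      · rwa [h]
    refine ⟨{v6, v2, v3, v4, v5}, {v3}, ?_, by simp, ?_, ?_, by simp, ?_, ?_, ?_⟩
    · intro y hy
      simp only [Finset.mem_insert, Finset.mem_singleton] at hy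
      rcases hy with rfl | rfl | rfl | rfl | rfl <;> assumption
    · intro x hx y hy hxy
      simp only [Finset.mem_insert, Finset.mem_singleton] at hx ⊢
      rcases hx with rfl | rfl | rfl | rfl | rfl
      · have := o1 y hy hxy; tauto
      · have := o2 y hy hxy; tauto
      · have := o3 y hy hxy; tauto
      · have := o4 y hy hxy; tauto
      · have := o5 y hy hxy; tauto
    · rw [Finset.card_insert_of_notMem e1, Finset.card_insert_of_notMem e2,
        Finset.card_insert_of_notMem e3, Finset.card_insert_of_notMem e4]; simp
    · intro x hx y hy hxy
      simp only [Finset.mem_insert, Finset.mem_singleton] at hx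
      rcases hx with rfl | rfl | rfl | rfl | rfl
      · left; left; rfl
      · left; right; right; exact ⟨v3, by simp, a23.symm⟩
      · left; right; left; simp
      · left; right; right; exact ⟨v3, by simp, a34⟩
      · right
        have hyW : y ∈ W := by
          simp only [Finset.mem_insert, Finset.mem_singleton] at hy
          rcases hy with rfl | rfl | rfl | rfl | rfl <;> assumption
        rcases o5 y hyW hxy with rfl | rfl
        · right; right; exact ⟨v3, by simp, a34⟩
        · left; rfl
    · intro x hx
      simp only [Finset.mem_insert, Finset.mem_singleton] at hx
      rcases hx with rfl | rfl | rfl | rfl | rfl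
      · left; rfl
      · right; left; exact a12
      · right; right; exact ⟨v2, by simp, a12, a23⟩
      · right; right; exact ⟨v5, by simp, a56.symm, a45.symm⟩
      · right; left; exact a56.symm
    · rw [Finset.sum_insert e1, Finset.sum_insert e2, Finset.sum_insert e3, Finset.sum_insert e4,
        Finset.sum_singleton, d1, d2, d3, d4, d5]; simp
  left
  have f5 : v5 ∉ ({v6} : Finset V) := by simp [n56]
  have f4 : v4 ∉ ({v5, v6} : Finset V) := by simp [n45, n64.symm]
  have f3 : v3 ∉ ({v4, v5, v6} : Finset V) := by simp [n34, n53.symm, n63.symm]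
  have f2 : v2 ∉ ({v3, v4, v5, v6} : Finset V) := by simp [n23, n42.symm, n52.symm, n62.symm]
  have f1 : v1 ∉ ({v2, v3, v4, v5, v6} : Finset V) := by
    simp [n12, n31.symm, n41.symm, n51.symm, Ne.symm c5]
  by_cases c6 : v7 = v1
  · subst c6
    have o1 : ∀ w ∈ W, G.Adj v7 w → w = v2 ∨ w = v6 := by
      obtain ⟨z, hz, hz2, hz1, oz⟩ := other G d1 w2 a12
      rcases oz _ w6 a67.symm with h | h
      · exact absurd h n62
      · rwa [h]
    apply step_closed G ih hmin 1 (fun x hx j hj => b_c1 _ _ hj (ho x hx))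
      {v7, v2, v3, v4, v5, v6} {v7, v4}
    · intro y hy
      simp only [Finset.mem_insert, Finset.mem_singleton] at hy
      rcases hy with rfl | rfl | rfl | rfl | rfl | rfl <;> assumption
    · exact ⟨v7, by simp⟩
    · intro x hx y hy hxy
      simp only [Finset.mem_insert, Finset.mem_singleton] at hx ⊢
      rcases hx with rfl | rfl | rfl | rfl | rfl | rfl
      · have := o1 y hy hxy; tauto
      · have := o2 y hy hxy; tauto
      · have := o3 y hy hxy; tauto
      · have := o4 y hy hxy; tauto
      · have := o5 y hy hxy; tauto
      · have := o6 y hy hxy; tauto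
    · intro x hx y hy hxy
      simp only [Finset.mem_insert, Finset.mem_singleton] at hx
      left
      rcases hx with rfl | rfl | rfl | rfl | rfl | rfl
      · left; simp
      · right; exact ⟨v7, by simp, a12⟩
      · right; exact ⟨v4, by simp, a34.symm⟩
      · left; simp
      · right; exact ⟨v4, by simp, a45⟩
      · right; exact ⟨v7, by simp, a67.symm⟩
    · have := Finset.card_le_two (a := v7) (b := v4)
      rw [Finset.sum_insert f1, Finset.sum_insert f2, Finset.sum_insert f3, Finset.sum_insert f4,
        Finset.sum_insert f5, Finset.sum_singleton, d1, d2, d3, d4, d5, d6,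
        Finset.card_insert_of_notMem f1, Finset.card_insert_of_notMem f2,
        Finset.card_insert_of_notMem f3, Finset.card_insert_of_notMem f4,
        Finset.card_insert_of_notMem f5, Finset.card_singleton]
      omega
  have n72 : v7 ≠ v2 := by
    rintro rfl
    rcases o2 _ w6 a67.symm with h | h
    · exact c5 h
    · exact n63 h
  have n73 : v7 ≠ v3 := by
    rintro rfl
    rcases o3 _ w6 a67.symm with h | h
    · exact n62 h
    · exact n64 h
  have n74 : v7 ≠ v4 := by rintro rfl; exact h3 _ _ _ a45 a56 a67
  have g6 : v6 ∉ ({v7} : Finset V) := by simp [n67]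
  have g5 : v5 ∉ ({v6, v7} : Finset V) := by simp [n56, n75.symm]
  have g4 : v4 ∉ ({v5, v6, v7} : Finset V) := by simp [n45, n64.symm, n74.symm]
  have g3 : v3 ∉ ({v4, v5, v6, v7} : Finset V) := by
    simp [n34, n53.symm, n63.symm, n73.symm]
  have g2 : v2 ∉ ({v3, v4, v5, v6, v7} : Finset V) := by
    simp [n23, n42.symm, n52.symm, n62.symm, n72.symm]
  have g1 : v1 ∉ ({v2, v3, v4, v5, v6, v7} : Finset V) := by
    simp [n12, n31.symm, n41.symm, n51.symm, Ne.symm c5, Ne.symm c6]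
  apply step_loose G ih hmin {v1, v2, v3, v4, v5, v6, v7} {v2, v6}
  · intro y hy
    simp only [Finset.mem_insert, Finset.mem_singleton] at hy
    rcases hy with rfl | rfl | rfl | rfl | rfl | rfl | rfl <;> assumption
  · exact ⟨v1, by simp⟩
  · intro x hx y hy hxy
    simp only [Finset.mem_insert, Finset.mem_singleton] at hx
    rcases hx with rfl | rfl | rfl | rfl | rfl | rfl | rfl
    · left; right; exact ⟨v2, by simp, a12.symm⟩
    · left; left; simp
    · left; right; exact ⟨v2, by simp, a23⟩
    · right
      rcases o4 y hy hxy with rfl | rfl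
      · right; exact ⟨v2, by simp, a23⟩
      · right; exact ⟨v6, by simp, a56.symm⟩
    · left; right; exact ⟨v6, by simp, a56.symm⟩
    · left; left; simp
    · left; right; exact ⟨v6, by simp, a67⟩
  · have := Finset.card_le_two (a := v2) (b := v6)
    have z1 : d G (W \ {v1, v2, v3, v4, v5, v6, v7}) v1 + 1 ≤ d G W v1 :=
      d_lt G Finset.sdiff_subset w2 (by simp) a12
    have z7 : d G (W \ {v1, v2, v3, v4, v5, v6, v7}) v7 + 1 ≤ d G W v7 :=
      d_lt G Finset.sdiff_subset w6 (by simp) a67.symm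
    have z2 : d G (W \ {v1, v2, v3, v4, v5, v6, v7}) v2 = 0 := by
      apply d_zero; intro y hy hvy; rcases o2 y hy hvy with rfl | rfl <;> simp
    have z3 : d G (W \ {v1, v2, v3, v4, v5, v6, v7}) v3 = 0 := by
      apply d_zero; intro y hy hvy; rcases o3 y hy hvy with rfl | rfl <;> simp
    have z4 : d G (W \ {v1, v2, v3, v4, v5, v6, v7}) v4 = 0 := by
      apply d_zero; intro y hy hvy; rcases o4 y hy hvy with rfl | rfl <;> simp
    have z5 : d G (W \ {v1, v2, v3, v4, v5, v6, v7}) v5 = 0 := by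
      apply d_zero; intro y hy hvy; rcases o5 y hy hvy with rfl | rfl <;> simp
    have z6 : d G (W \ {v1, v2, v3, v4, v5, v6, v7}) v6 = 0 := by
      apply d_zero; intro y hy hvy; rcases o6 y hy hvy with rfl | rfl <;> simp
    have y1 : b (d G (W \ {v1, v2, v3, v4, v5, v6, v7}) v1) ≤ b 1 := b_mono (by omega)
    have y7 : b (d G (W \ {v1, v2, v3, v4, v5, v6, v7}) v7) ≤ b 1 := b_mono (by omega)
    have b1 : b 1 = 9 := rfl
    rw [Finset.sum_insert g1, Finset.sum_insert g2, Finset.sum_insert g3, Finset.sum_insert g4,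
      Finset.sum_insert g5, Finset.sum_insert g6, Finset.sum_singleton, z2, z3, z4, z5, z6, b_zero,
      Finset.card_insert_of_notMem g1, Finset.card_insert_of_notMem g2,
      Finset.card_insert_of_notMem g3, Finset.card_insert_of_notMem g4,
      Finset.card_insert_of_notMem g5, Finset.card_insert_of_notMem g6, Finset.card_singleton]
    omega

lemma main_ind_s8 (h3 : ∀ a b c, G.Adj a b → G.Adj b c → G.Adj c a → False)
    (h4 : ∀ a b c e, G.Adj a b → G.Adj b c → G.Adj c e → G.Adj e a → a ≠ c → b ≠ e → False)
    (hmin : ∀ v, 3 ≤ d G Finset.univ v) (W : Finset V) : P G W := by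
  induction W using Finset.strongInduction with
  | H W ih =>
  by_cases k0 : ∃ v ∈ W, d G W v = 0
  · obtain ⟨v, hv, hd⟩ := k0
    have hno : ∀ w ∈ W, ¬ G.Adj v w := by
      intro w hw ha
      unfold d at hd
      rw [Finset.card_eq_zero, Finset.filter_eq_empty_iff] at hd
      exact hd hw ha
    apply step_closed G ih hmin 0 (fun v _ j hj => b_c0 _ _ hj) {v} ∅ (by simpa using hv) (by simp)
    · intro u hu w hw ha
      rw [Finset.mem_singleton] at hu
      subst hu
      exact absurd ha (hno w hw)
    · intro u hu w hw ha
      rw [Finset.mem_singleton] at hu hw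
      subst hu hw
      exact absurd ha (G.irrefl)
    · simp
  by_cases k1 : ∃ v ∈ W, 4 ≤ d G W v
  · obtain ⟨v, hv, hd⟩ := k1
    exact case12 G ih hmin v hv (Or.inl hd)
  push Not at k0 k1
  by_cases k2 : ∃ v ∈ W, d G W v = 3
  · obtain ⟨v, hv, hd⟩ := k2
    exact case12 G ih hmin v hv (Or.inr ⟨hd, fun u hu => by have := k1 u hu; omega⟩)
  push Not at k2
  have hd1 : ∀ u ∈ W, 1 ≤ d G W u := fun u hu => by have := k0 u hu; omega
  have hd2 : ∀ u ∈ W, d G W u ≤ 2 := fun u hu => by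
    have := k1 u hu; have := k2 u hu; omega
  by_cases k3 : ∃ x, x ∉ W ∧ 4 ≤ d G W x
  · obtain ⟨x, hx, hd⟩ := k3
    exact case3 G ih hd2 x hx hd
  push Not at k3
  have ho : ∀ x, x ∉ W → d G W x ≤ 3 := fun x hx => by have := k3 x hx; omega
  by_cases k4 : ∃ v ∈ W, ∃ u ∈ W, G.Adj v u ∧ d G W v = 1 ∧ d G W u = 2
  · obtain ⟨v, hv, u, hu, ha, dv, du⟩ := k4
    exact case4a G ih hmin hd1 hd2 ho v u hv hu ha dv du
  push Not at k4
  have hs : ∀ u ∈ W, ∀ v ∈ W, G.Adj u v → d G W u = 2 → d G W v = 2 := by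
    intro u hu v hv ha hd
    by_contra hne
    have := hd1 v hv
    have := hd2 v hv
    exact k4 v hv u hu ha.symm (by omega) hd
  by_contra hP
  have hpiece : ∀ y ∈ W, Piece G W y := by
    intro y hy
    by_cases hd : d G W y = 2
    · rcases case4b G ih h3 h4 hmin hs ho y hy hd with h | h
      · exact absurd h hP
      · exact h
    · have e1 : d G W y = 1 := by have := hd1 y hy; have := hd2 y hy; omega
      obtain ⟨u, hu, ha⟩ := exists_nb G (hd1 y hy)
      have := hd1 u hu
      have := hd2 u hu
      have := k4 y hy u hu ha e1
      exact piece1 G y u hy hu ha e1 (by omega)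
  apply hP
  by_cases k5 : ∃ x, x ∉ W ∧ 2 ≤ d G W x
  · obtain ⟨x, hx, hd⟩ := k5
    obtain ⟨y, hy, z, hz, hyz⟩ := Finset.one_lt_card.1 hd
    obtain ⟨hyW, hxy⟩ := Finset.mem_filter.1 hy
    obtain ⟨hzW, hxz⟩ := Finset.mem_filter.1 hz
    obtain ⟨R, T, hR, hyR, hcl, hc, ht, hcov, hdist, -⟩ := hpiece y hyW
    obtain ⟨R', T', hR', hzR', hcl', hc', ht', hcov', hdist', -⟩ := hpiece z hzW
    have hdisj : Disjoint R R' := by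
      rw [Finset.disjoint_left]
      intro w hw hw'
      have hyR' : y ∈ R' := by
        rcases hdist w hw with rfl | h | ⟨q, hq, h1, h2⟩
        · exact hw'
        · exact hcl' w hw' y hyW h.symm
        · exact hcl' q (hcl' w hw' q (hR hq) h2.symm) y hyW h1.symm
      rcases hdist' y hyR' with h | h | ⟨q, hq, h1, h2⟩
      · exact hyz h
      · exact h3 _ _ _ hxz h hxy.symm
      · exact h4 _ _ _ _ hxz h1 h2 hxy.symm (by rintro rfl; exact hx (hR' hq)) hyz.symm
    have key : ∀ (a : V) (T0 : Finset V) (u : V), G.Adj x a → T0 ⊆ T ∪ T' →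
        (u = a ∨ Dom G T0 u) → Dom G (insert x (T ∪ T')) u := by
      intro a T0 u hxa hT hu
      rcases hu with rfl | hu
      · exact Or.inr ⟨x, by simp, hxa⟩
      · exact Dom.mono G (hT.trans (Finset.subset_insert _ _)) hu
    apply step_loose G ih hmin (R ∪ R') (insert x (T ∪ T')) (Finset.union_subset hR hR')
      ⟨y, Finset.mem_union_left _ hyR⟩
    · intro u hu v hv ha
      rcases Finset.mem_union.1 hu with hu | hu
      · rcases hcov u hu v (hcl u hu v hv ha) ha with h | h
        · exact Or.inl (key y T u hxy Finset.subset_union_left h)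
        · exact Or.inr (key y T v hxy Finset.subset_union_left h)
      · rcases hcov' u hu v (hcl' u hu v hv ha) ha with h | h
        · exact Or.inl (key z T' u hxz Finset.subset_union_right h)
        · exact Or.inr (key z T' v hxz Finset.subset_union_right h)
    · have s0 : ∑ r ∈ R ∪ R', b (d G (W \ (R ∪ R')) r) = 0 := by
        apply Finset.sum_eq_zero
        intro r hr
        rw [d_zero, b_zero]
        intro w hw ha
        rw [Finset.mem_union] at hr ⊢
        rcases hr with hr | hr
        · exact Or.inl (hcl r hr w hw ha)
        · exact Or.inr (hcl' r hr w hw ha)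
      have s1 := Finset.card_union_of_disjoint hdisj
      have s2 := Finset.card_insert_le x (T ∪ T')
      have s3 := Finset.card_union_le T T'
      omega
  push Not at k5
  rcases W.eq_empty_or_nonempty with rfl | ⟨y, hy⟩
  · exact ⟨∅, by simp, by simp⟩
  obtain ⟨R, T, hR, hyR, hcl, hc, ht, hcov, hdist, hsum⟩ := hpiece y hy
  apply step_closed G ih hmin 9
    (fun x hx j hj => b_c9 _ _ hj (by have := k5 x hx; omega)) R (insert y T) hR ⟨y, hyR⟩ hcl
    (by
      have key : ∀ u, (u = y ∨ Dom G T u) → Dom G (insert y T) u := by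
        intro u hu
        rcases hu with rfl | hu
        · exact Or.inl (by simp)
        · exact Dom.mono G (Finset.subset_insert _ _) hu
      intro u hu v hv ha
      exact (hcov u hu v hv ha).imp (key u) (key v))
  have s2 := Finset.card_insert_le y T
  omega

end Iso

/-- If `G` has order `n`, minimum degree at least 3 and girth at least 5,
then `ι(G) ≤ 11n/34`. -/
theorem isolation_number_girth_five_minDegree_three {V : Type*} [Fintype V]
    (G : SimpleGraph V) (n : ℕ) (hn : Fintype.card V = n)
    (hmin : ∀ v : V, 3 ≤ (G.neighborSet v).ncard) (hgirth : 5 ≤ G.egirth) :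
    (isolationNumber G : ℝ) ≤ 11 * n / 34 := by
  have hlen : ∀ (a : V) (w : G.Walk a a), w.IsCycle → 5 ≤ w.length := by
    intro a w hw
    have := hgirth.trans (SimpleGraph.egirth_le_length hw)
    exact_mod_cast this
  have h3 : ∀ a b c, G.Adj a b → G.Adj b c → G.Adj c a → False := by
    intro a b c hab hbc hca
    have hc : (SimpleGraph.Walk.cons hab (.cons hbc (.cons hca .nil))).IsCycle := by
      have n1 := hab.ne
      have n2 := hbc.ne
      have n3 := hca.ne
      simp [SimpleGraph.Walk.isCycle_def, SimpleGraph.Walk.isTrail_def]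
      grind
    have := hlen _ _ hc
    simp at this
  have h4 : ∀ a b c e, G.Adj a b → G.Adj b c → G.Adj c e → G.Adj e a → a ≠ c → b ≠ e → False := by
    intro a b c e hab hbc hce hea hac hbe
    have hc : (SimpleGraph.Walk.cons hab (.cons hbc (.cons hce (.cons hea .nil)))).IsCycle := by
      have n1 := hab.ne
      have n2 := hbc.ne
      have n3 := hce.ne
      have n4 := hea.ne
      simp [SimpleGraph.Walk.isCycle_def, SimpleGraph.Walk.isTrail_def]
      grind
    have := hlen _ _ hc
    simp at this
  have hmin' : ∀ v, 3 ≤ Iso.d G Finset.univ v := by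
    intro v
    have := hmin v
    rw [Set.ncard_eq_toFinset_card'] at this
    refine this.trans (Finset.card_le_card ?_)
    intro w hw
    simpa using hw
  obtain ⟨S, hS, hc⟩ := Iso.main_ind_s8 G h3 h4 hmin' Finset.univ
  have hphi : Iso.Phi G Finset.univ = 33 * n := by
    simp [Iso.Phi, hn]
  rw [hphi] at hc
  have hle : isolationNumber G ≤ S.card := by
    apply Nat.sInf_le
    refine ⟨(S : Set V), ?_, Set.ncard_coe_finset S⟩
    intro u v huv
    have := hS u (Finset.mem_univ _) v (Finset.mem_univ _) huv
    simpa [closedNbhd, Iso.Dom] using this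
  have h5 : 102 * isolationNumber G ≤ 33 * n := by omega
  have h6 : (102 : ℝ) * isolationNumber G ≤ 33 * n := by exact_mod_cast h5
  linarith
end
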